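/- Let a > 0 and δ ∈ (0,1/8) be fixed. The series ζ_{E,0}(s) = Σ_{k≥1} E_{0,k}(s) converges absolutely and locally uniformly on the strip {s ∈ ℂ : 1 < Re(s) < 2}, and its sum extends to a meromorphic function on ℂ which is holomorphic at s = 0. Moreover, for fixed δ, the derivative at 0 of this extension satisfies ζ_{E,0}'(0) = ζ(0)·log(a) + O(1/a²) as a → +∞. -/

import Mathlib

open MeasureTheory Filter

/-- The error integral `E_{0,k}(s)` for the model hyperbolic cusp of height `a`:
`E_{0,k}(s) = -(sin(πs)/π) · ∫_{k^{δ-1}}^{∞} (k²u² - 1/4)^{-s} · u/(u² + (2πa)²) du`. -/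
noncomputable def cuspE0 (a δ : ℝ) (k : ℕ) (s : ℂ) : ℂ :=
  -(Complex.sin ((Real.pi : ℂ) * s) / (Real.pi : ℂ)) *
    ∫ u in Set.Ioi ((k : ℝ) ^ (δ - 1)),
      (((k : ℝ) ^ 2 * u ^ 2 - 1 / 4 : ℝ) : ℂ) ^ (-s) *
        ((u / (u ^ 2 + (2 * Real.pi * a) ^ 2) : ℝ) : ℂ)

open Topology


lemma cpow_real_mul {x y : ℝ} (hx : 0 < x) (hy : 0 < y) (w : ℂ) :
    ((x * y : ℝ) : ℂ) ^ w = (x : ℂ) ^ w * (y : ℂ) ^ w := by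
  rw [Complex.ofReal_mul, Complex.mul_cpow_ofReal_nonneg hx.le hy.le]

lemma cpow_real_inv {x : ℝ} (hx : 0 < x) (w : ℂ) :
    ((x⁻¹ : ℝ) : ℂ) ^ w = (x : ℂ) ^ (-w) := by
  rw [Complex.ofReal_inv, Complex.inv_cpow, Complex.cpow_neg]
  rw [Complex.arg_ofReal_of_nonneg hx.le]
  exact Real.pi_ne_zero.symm

lemma cpow_real_div {x y : ℝ} (hx : 0 < x) (hy : 0 < y) (w : ℂ) :
    ((x / y : ℝ) : ℂ) ^ w = (x : ℂ) ^ w * (y : ℂ) ^ (-w) := by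
  rw [div_eq_mul_inv, cpow_real_mul hx (inv_pos.2 hy), cpow_real_inv hy]

lemma mellin_one_add_inv {w : ℂ} (h0 : 0 < w.re) (h1 : w.re < 1) :
    mellin (fun t : ℝ => ((1 + t : ℝ) : ℂ)⁻¹) w = Real.pi / Complex.sin (Real.pi * w) := by
  have hb := Complex.Gamma_mul_Gamma_eq_betaIntegral h0 (t := 1 - w) (by simpa using h1)
  rw [Complex.Gamma_mul_Gamma_one_sub] at hb
  simp only [add_sub_cancel, Complex.Gamma_one, one_mul] at hb
  rw [hb, Complex.betaIntegral, intervalIntegral.integral_of_le zero_le_one,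
    integral_Ioc_eq_integral_Ioo, mellin]
  have himg : (fun x : ℝ => x / (1 - x)) '' (Set.Ioo 0 1) = Set.Ioi 0 := by
    ext t
    simp only [Set.mem_image, Set.mem_Ioo, Set.mem_Ioi]
    constructor
    · rintro ⟨x, ⟨hx0, hx1⟩, rfl⟩
      exact div_pos hx0 (by linarith)
    · intro ht
      refine ⟨t / (1 + t), ⟨by positivity, ?_⟩, ?_⟩
      · rw [div_lt_one (by positivity)]; linarith
      · field_simp
        ring
  rw [← himg, integral_image_eq_integral_abs_deriv_smul (f' := fun x => 1 / (1 - x) ^ 2)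
    measurableSet_Ioo]
  · apply setIntegral_congr_fun measurableSet_Ioo
    intro x hx
    have hx0 : 0 < x := hx.1
    have hx1 : 0 < 1 - x := by linarith [hx.2]
    have e1 : (1 + x / (1 - x))⁻¹ = 1 - x := by field_simp; ring
    have e2 : ((x / (1 - x) : ℝ) : ℂ) ^ (w - 1) = (x : ℂ) ^ (w - 1) * ((1 - x : ℝ) : ℂ) ^ (1 - w) := by
      rw [cpow_real_div hx0 hx1, neg_sub]
    simp only
    rw [← Complex.ofReal_inv, e1, e2, abs_of_pos (by positivity)]
    have hc : ((1 - x : ℝ) : ℂ) ≠ 0 := by exact_mod_cast hx1.ne'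
    have e3 : ((1 - x : ℝ) : ℂ) ^ (1 - w - 1) = ((1 - x : ℝ) : ℂ) ^ (1 - w) / ((1 - x : ℝ) : ℂ) := by
      rw [Complex.cpow_sub _ _ hc, Complex.cpow_one]
    rw [show (1 - (x : ℂ)) = ((1 - x : ℝ) : ℂ) by push_cast; ring, e3]
    simp only [Complex.real_smul, smul_eq_mul, Complex.ofReal_div, Complex.ofReal_pow, Complex.ofReal_one]
    field_simp
  · intro x hx
    have hx1 : 1 - x ≠ 0 := by linarith [hx.2]
    have := ((hasDerivAt_id x).div ((hasDerivAt_id x).const_sub 1) hx1).hasDerivWithinAt (s := Set.Ioo 0 1)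
    convert! this using 1
    simp
  · intro x hx y hy hxy
    have hx1 : 1 - x ≠ 0 := by linarith [hx.2]
    have hy1 : 1 - y ≠ 0 := by linarith [hy.2]
    simp only at hxy
    rw [div_eq_div_iff hx1 hy1] at hxy
    linarith

noncomputable def hlow (r : ℝ) (s : ℂ) : ℂ :=
  mellin (Set.indicator (Set.Ioc 0 1) (fun t : ℝ => ((1 + r * t : ℝ) : ℂ)⁻¹)) (2 - s)

noncomputable def jup (r : ℝ) (s : ℂ) : ℂ :=
  mellin (Set.indicator (Set.Ioi 1) (fun t : ℝ => ((1 + r * t : ℝ) : ℂ)⁻¹)) (1 - s)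

lemma ker_contOn {r : ℝ} (hr : 0 < r) :
    ContinuousOn (fun t : ℝ => ((1 + r * t : ℝ) : ℂ)⁻¹) (Set.Ioi 0) := by
  apply ContinuousOn.inv₀ (by fun_prop)
  intro t ht
  have : 0 < 1 + r * t := by have := mul_pos hr ht; linarith
  exact_mod_cast this.ne'

lemma ker_locInt {r : ℝ} (hr : 0 < r) :
    LocallyIntegrableOn (fun t : ℝ => ((1 + r * t : ℝ) : ℂ)⁻¹) (Set.Ioi 0) :=
  (ker_contOn hr).locallyIntegrableOn measurableSet_Ioi

lemma ker_locInt_ind {r : ℝ} (hr : 0 < r) {S : Set ℝ} (hS : MeasurableSet S) :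
    LocallyIntegrableOn (S.indicator (fun t : ℝ => ((1 + r * t : ℝ) : ℂ)⁻¹)) (Set.Ioi 0) := by
  intro x hx
  obtain ⟨u, hu, hi⟩ := ker_locInt hr x hx
  exact ⟨u, hu, hi.indicator hS⟩

lemma ker_norm_le_one {r t : ℝ} (hr : 0 < r) (ht : 0 < t) : ‖((1 + r * t : ℝ) : ℂ)⁻¹‖ ≤ 1 := by
  have := mul_pos hr ht
  rw [norm_inv, Complex.norm_real, Real.norm_of_nonneg (by linarith)]
  apply inv_le_one_of_one_le₀; linarith

lemma ker_norm_le_inv {r t : ℝ} (hr : 0 < r) (ht : 0 < t) :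
    ‖((1 + r * t : ℝ) : ℂ)⁻¹‖ ≤ r⁻¹ * t⁻¹ := by
  have := mul_pos hr ht
  rw [norm_inv, Complex.norm_real, Real.norm_of_nonneg (by linarith), ← mul_inv]
  apply inv_anti₀ this; linarith

lemma ker_bot {r : ℝ} (hr : 0 < r) (S : Set ℝ) :
    (S.indicator (fun t : ℝ => ((1 + r * t : ℝ) : ℂ)⁻¹)) =O[𝓝[>] 0] (· ^ (-(0:ℝ))) := by
  apply Asymptotics.IsBigO.of_bound 1
  filter_upwards [self_mem_nhdsWithin] with t ht
  simp only [neg_zero, Real.rpow_zero, norm_one, mul_one]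
  exact (norm_indicator_le_norm_self _ _).trans (ker_norm_le_one hr ht)

lemma ker_top {r : ℝ} (hr : 0 < r) (S : Set ℝ) :
    (S.indicator (fun t : ℝ => ((1 + r * t : ℝ) : ℂ)⁻¹)) =O[atTop] (· ^ (-(1:ℝ))) := by
  apply Asymptotics.IsBigO.of_bound r⁻¹
  filter_upwards [eventually_gt_atTop 0] with t ht
  refine (norm_indicator_le_norm_self _ _).trans ((ker_norm_le_inv hr ht).trans ?_)
  rw [Real.rpow_neg_one, Real.norm_of_nonneg (by positivity)]

lemma low_top {r : ℝ} (a : ℝ) :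
    ((Set.Ioc 0 1).indicator (fun t : ℝ => ((1 + r * t : ℝ) : ℂ)⁻¹)) =O[atTop] (· ^ (-a)) := by
  apply Asymptotics.IsBigO.of_bound 1
  filter_upwards [eventually_gt_atTop 1] with t ht
  rw [Set.indicator_of_notMem (by simp [ht])]
  simp

lemma up_bot {r : ℝ} (a : ℝ) :
    ((Set.Ioi 1).indicator (fun t : ℝ => ((1 + r * t : ℝ) : ℂ)⁻¹)) =O[𝓝[>] 0] (· ^ (-a)) := by
  apply Asymptotics.IsBigO.of_bound 1
  filter_upwards [eventually_nhdsWithin_of_eventually_nhds (gt_mem_nhds zero_lt_one)] with t ht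
  rw [Set.indicator_of_notMem (by simp [ht.le])]
  simp

lemma hlow_differentiableAt {r : ℝ} (hr : 0 < r) {s : ℂ} (hs : s.re < 2) :
    DifferentiableAt ℂ (hlow r) s := by
  have h := mellin_differentiableAt_of_isBigO_rpow (s := 2 - s) (ker_locInt_ind hr measurableSet_Ioc)
    (low_top (3 - s.re)) (by simp; linarith) (ker_bot hr _) (by simp; linarith)
  exact h.comp s (by fun_prop)

lemma jup_differentiableAt {r : ℝ} (hr : 0 < r) {s : ℂ} (hs : 0 < s.re) :
    DifferentiableAt ℂ (jup r) s := by
  have h := mellin_differentiableAt_of_isBigO_rpow (s := 1 - s) (ker_locInt_ind hr measurableSet_Ioi)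
    (ker_top hr _) (by simp; linarith) (up_bot (- s.re)) (by simp)
  exact h.comp s (by fun_prop)

lemma hlow_conv {r : ℝ} (hr : 0 < r) {s : ℂ} (hs : s.re < 2) :
    MellinConvergent (Set.indicator (Set.Ioc 0 1) (fun t : ℝ => ((1 + r * t : ℝ) : ℂ)⁻¹)) (2 - s) :=
  mellinConvergent_of_isBigO_rpow (s := 2 - s) (ker_locInt_ind hr measurableSet_Ioc)
    (low_top (3 - s.re)) (by simp; linarith) (ker_bot hr _) (by simp; linarith)

lemma jup_conv {r : ℝ} (hr : 0 < r) {s : ℂ} (hs : 0 < s.re) :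
    MellinConvergent (Set.indicator (Set.Ioi 1) (fun t : ℝ => ((1 + r * t : ℝ) : ℂ)⁻¹)) (1 - s) :=
  mellinConvergent_of_isBigO_rpow (s := 1 - s) (ker_locInt_ind hr measurableSet_Ioi)
    (ker_top hr _) (by simp; linarith) (up_bot (- s.re)) (by simp)

lemma mellin_ind (f : ℝ → ℂ) {S : Set ℝ} (hS : MeasurableSet S) (hS0 : S ⊆ Set.Ioi 0) (w : ℂ) :
    mellin (S.indicator f) w = ∫ t in S, (t : ℂ) ^ (w - 1) * f t := by
  rw [mellin]
  have : ∀ t : ℝ, (t : ℂ) ^ (w - 1) • S.indicator f t = S.indicator (fun t : ℝ => (t : ℂ) ^ (w - 1) * f t) t := by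
    intro t
    by_cases h : t ∈ S <;> simp [h]
  simp_rw [this]
  rw [setIntegral_indicator hS, Set.inter_eq_right.2 hS0]

lemma mellinConv_ind (f : ℝ → ℂ) {S : Set ℝ} (hS : MeasurableSet S) (hS0 : S ⊆ Set.Ioi 0) (w : ℂ)
    (h : MellinConvergent (S.indicator f) w) :
    IntegrableOn (fun t : ℝ => (t : ℂ) ^ (w - 1) * f t) S := by
  have h2 : IntegrableOn (fun t : ℝ => (t : ℂ) ^ (w - 1) • S.indicator f t) S := h.mono_set hS0
  refine h2.congr_fun (fun t ht => ?_) hS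
  simp [ht]

lemma low_sub : Set.Ioc (0:ℝ) 1 ⊆ Set.Ioi 0 := fun _ h => h.1
lemma up_sub : Set.Ioi (1:ℝ) ⊆ Set.Ioi 0 := fun x (h : 1 < x) => show 0 < x from lt_trans zero_lt_one h

lemma jup_eq (r : ℝ) (s : ℂ) :
    jup r s = ∫ t in Set.Ioi (1:ℝ), (t : ℂ) ^ (-s) * ((1 + r * t : ℝ) : ℂ)⁻¹ := by
  rw [jup, mellin_ind _ measurableSet_Ioi up_sub]
  simp

lemma hlow_eq (r : ℝ) (s : ℂ) :
    hlow r s = ∫ t in Set.Ioc (0:ℝ) 1, (t : ℂ) ^ (1-s) * ((1 + r * t : ℝ) : ℂ)⁻¹ := by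
  rw [hlow, mellin_ind _ measurableSet_Ioc low_sub]
  rw [show 2 - s - 1 = 1 - s by ring]

lemma pow_low {s : ℂ} (hs : s.re < 2) :
    IntegrableOn (fun t : ℝ => (t : ℂ) ^ (1 - s)) (Set.Ioc 0 1) ∧
    ∫ t in Set.Ioc (0:ℝ) 1, (t : ℂ) ^ (1-s) = 1 / (2 - s) := by
  constructor
  · have := intervalIntegral.intervalIntegrable_cpow' (a := 0) (b := 1) (r := 1 - s) (by simp; linarith)
    rwa [intervalIntegrable_iff_integrableOn_Ioc_of_le zero_le_one] at this
  · rw [← intervalIntegral.integral_of_le zero_le_one, integral_cpow (Or.inl (by simp; linarith))]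
    have h : 2 - s ≠ 0 := by
      intro h; have := congrArg Complex.re h; simp at this; linarith
    rw [show 1 - s + 1 = 2 - s by ring]
    simp [h]

lemma pow_up {s : ℂ} (hs : 1 < s.re) :
    IntegrableOn (fun t : ℝ => (t : ℂ) ^ (- s)) (Set.Ioi 1) ∧
    ∫ t in Set.Ioi (1:ℝ), (t : ℂ) ^ (-s) = 1 / (s - 1) := by
  constructor
  · exact integrableOn_Ioi_cpow_of_lt (by simp; linarith) zero_lt_one
  · rw [integral_Ioi_cpow_of_lt (by simp; linarith) zero_lt_one]
    have h : s - 1 ≠ 0 := by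
      intro h; have := congrArg Complex.re h; simp at this; linarith
    have h' : -s + 1 ≠ 0 := by
      intro h2; apply h; linear_combination -h2
    simp only [Complex.ofReal_one, Complex.one_cpow]
    field_simp
    ring

lemma hlow_rec {r : ℝ} (hr : 0 < r) {s : ℂ} (hs : s.re < 2) :
    hlow r s = 1 / (2 - s) - r * hlow r (s - 1) := by
  rw [hlow_eq, hlow_eq, ← (pow_low hs).2, ← integral_const_mul, ← integral_sub (pow_low hs).1]
  · apply setIntegral_congr_fun measurableSet_Ioc
    intro t ht
    have ht0 : (0:ℝ) < t := ht.1
    have hc : (t : ℂ) ≠ 0 := by exact_mod_cast ht0.ne'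
    have : ((1 + r * t : ℝ) : ℂ) ≠ 0 := by
      have := mul_pos hr ht0
      exact_mod_cast (by linarith : 1 + r * t ≠ 0)
    simp only
    rw [show 1 - (s - 1) = (1 - s) + 1 by ring, Complex.cpow_add _ _ hc, Complex.cpow_one]
    field_simp
    push_cast; ring
  · have := mellinConv_ind _ measurableSet_Ioc low_sub _ (hlow_conv hr (s := s - 1) (by simp; linarith))
    rw [show 2 - (s - 1) - 1 = 1 - (s - 1) by ring] at this
    exact this.const_mul _

lemma jup_rec {r : ℝ} (hr : 0 < r) {s : ℂ} (hs : 1 < s.re) :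
    jup r s = 1 / (s - 1) - r * jup r (s - 1) := by
  rw [jup_eq, jup_eq, ← (pow_up hs).2, ← integral_const_mul, ← integral_sub (pow_up hs).1]
  · apply setIntegral_congr_fun measurableSet_Ioi
    intro t ht
    have ht0 : (0:ℝ) < t := up_sub ht
    have hc : (t : ℂ) ≠ 0 := by exact_mod_cast ht0.ne'
    have : ((1 + r * t : ℝ) : ℂ) ≠ 0 := by
      have := mul_pos hr ht0
      exact_mod_cast (by linarith : 1 + r * t ≠ 0)
    simp only
    rw [show -(s - 1) = (-s) + 1 by ring, Complex.cpow_add _ _ hc, Complex.cpow_one]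
    field_simp
    push_cast; ring
  · have := mellinConv_ind _ measurableSet_Ioi up_sub _ (jup_conv hr (s := s - 1) (by simp; linarith))
    rw [show 1 - (s - 1) - 1 = - (s - 1) by ring] at this
    exact this.const_mul _

lemma hlow_bound {r : ℝ} (hr : 0 < r) {s : ℂ} (hs : s.re < 2) : ‖hlow r s‖ ≤ 1 / (2 - s.re) := by
  have h := (pow_low (s := (s.re : ℂ)) (by simpa using hs))
  have h2 : ∫ t in Set.Ioc (0:ℝ) 1, t ^ (1 - s.re) = 1 / (2 - s.re) := by
    have h3 := h.2
    rw [← Complex.ofReal_inj, ← integral_complex_ofReal]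
    push_cast
    rw [← h3]
    apply setIntegral_congr_fun measurableSet_Ioc
    intro t ht
    simp only
    rw [Complex.ofReal_cpow ht.1.le]; push_cast; rfl
  rw [hlow_eq, ← h2]
  apply norm_integral_le_of_norm_le
  · have := intervalIntegral.intervalIntegrable_rpow' (a := 0) (b := 1) (r := 1 - s.re) (by linarith)
    rwa [intervalIntegrable_iff_integrableOn_Ioc_of_le zero_le_one] at this
  · filter_upwards [ae_restrict_mem measurableSet_Ioc] with t ht
    rw [norm_mul, Complex.norm_cpow_eq_rpow_re_of_pos ht.1]
    have := ker_norm_le_one hr ht.1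
    have h5 : 0 ≤ t ^ (1 - s).re := Real.rpow_nonneg ht.1.le _
    have h6 := mul_le_of_le_one_right h5 this
    simpa using h6

lemma jup_bound {r : ℝ} (hr : 0 < r) {s : ℂ} (hs : 1 < s.re) : ‖jup r s‖ ≤ 1 / (s.re - 1) := by
  have h2 : ∫ t in Set.Ioi (1:ℝ), t ^ (- s.re) = 1 / (s.re - 1) := by
    rw [integral_Ioi_rpow_of_lt (by linarith) zero_lt_one, Real.one_rpow, ← neg_div_neg_eq]
    congr 1 <;> ring
  rw [jup_eq, ← h2]
  apply norm_integral_le_of_norm_le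
  · exact integrableOn_Ioi_rpow_of_lt (by linarith) zero_lt_one
  · filter_upwards [ae_restrict_mem measurableSet_Ioi] with t ht
    have ht0 : (0:ℝ) < t := up_sub ht
    rw [norm_mul, Complex.norm_cpow_eq_rpow_re_of_pos ht0]
    have := ker_norm_le_one hr ht0
    have h5 : 0 ≤ t ^ (- s).re := Real.rpow_nonneg ht0.le _
    have h6 := mul_le_of_le_one_right h5 this
    simpa using h6

lemma sin_ne {s : ℂ} (h1 : 1 < s.re) (h2 : s.re < 2) : Complex.sin (Real.pi * s) ≠ 0 := by
  intro h
  rw [Complex.sin_eq_zero_iff] at h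
  obtain ⟨k, hk⟩ := h
  have hpi : (Real.pi : ℂ) ≠ 0 := by exact_mod_cast Real.pi_ne_zero
  have : s = k := by
    apply mul_left_cancel₀ hpi; rw [hk]; ring
  rw [this] at h1 h2
  simp at h1 h2
  have h1' : (1:ℤ) < k := by exact_mod_cast h1
  have h2' : k < 2 := by exact_mod_cast h2
  omega

lemma jup_formula {r : ℝ} (hr : 0 < r) {s : ℂ} (h1 : 1 < s.re) (h2 : s.re < 2) :
    jup r s = 1 / (s - 1) + r * hlow r s + (r : ℂ) ^ (s - 1) * (Real.pi / Complex.sin (Real.pi * s)) := by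
  have hj := jup_conv hr (s := s - 1) (by simp; linarith)
  rw [show (1:ℂ) - (s - 1) = 2 - s by ring] at hj
  have hadd := (hasMellin_add (hlow_conv hr h2) (s := 2 - s)
    hj).2
  have hfull : mellin (fun t => Set.indicator (Set.Ioc 0 1) (fun t : ℝ => ((1 + r * t : ℝ) : ℂ)⁻¹) t +
      Set.indicator (Set.Ioi 1) (fun t : ℝ => ((1 + r * t : ℝ) : ℂ)⁻¹) t) (2 - s)
      = mellin (fun t => (fun t : ℝ => ((1 + t : ℝ) : ℂ)⁻¹) (r * t)) (2 - s) := by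
    rw [mellin, mellin]
    apply setIntegral_congr_fun measurableSet_Ioi
    intro t ht
    have ht0 : (0:ℝ) < t := ht
    simp only
    congr 1
    by_cases h : t ≤ 1
    · rw [Set.indicator_of_mem (show t ∈ Set.Ioc (0:ℝ) 1 from ⟨ht0, h⟩),
        Set.indicator_of_notMem (by simpa using h)]
      simp
    · rw [Set.indicator_of_notMem (by simp [h]),
        Set.indicator_of_mem (show t ∈ Set.Ioi (1:ℝ) from not_le.1 h)]
      simp
  rw [hfull, mellin_comp_mul_left (fun t : ℝ => ((1 + t : ℝ) : ℂ)⁻¹) _ hr, mellin_one_add_inv (by simp; linarith) (by simp; linarith)] at hadd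
  have e : jup r (s - 1) = mellin (Set.indicator (Set.Ioi 1) (fun t : ℝ => ((1 + r * t : ℝ) : ℂ)⁻¹)) (2 - s) := by
    rw [jup]; congr 1; ring
  rw [← e, ← hlow] at hadd
  have hsin : Complex.sin (Real.pi * (2 - s)) = - Complex.sin (Real.pi * s) := by
    rw [show (Real.pi : ℂ) * (2 - s) = 2 * Real.pi - Real.pi * s by ring, Complex.sin_two_pi_sub]
  rw [hsin, smul_eq_mul] at hadd
  have hrc : (r : ℂ) ≠ 0 := by exact_mod_cast hr.ne'
  have hp : (r : ℂ) ^ (s - 1) = r * (r : ℂ) ^ (-(2 - s)) := by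
    rw [show s - 1 = 1 + (-(2 - s)) by ring, Complex.cpow_add _ _ hrc, Complex.cpow_one]
  rw [jup_rec hr h1, hp]
  have := sin_ne h1 h2
  rw [div_neg] at hadd
  linear_combination (r : ℂ) * hadd

/-- The lower limit of integration after the substitution. -/
noncomputable def cL (δ : ℝ) (k : ℕ) : ℝ := (k : ℝ) ^ (2 * δ) - 1 / 4
noncomputable def cC (B : ℝ) (k : ℕ) : ℝ := 1 / 4 + B * (k : ℝ) ^ 2
noncomputable def cr (B δ : ℝ) (k : ℕ) : ℝ := cL δ k / cC B k

lemma cL_ge {δ : ℝ} (hδ : 0 < δ) {k : ℕ} (hk : 1 ≤ k) : 3 / 4 ≤ cL δ k := by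
  have h1 : (1:ℝ) ≤ (k : ℝ) ^ (2 * δ) := Real.one_le_rpow (by exact_mod_cast hk) (by linarith)
  unfold cL; linarith

lemma cL_pos {δ : ℝ} (hδ : 0 < δ) {k : ℕ} (hk : 1 ≤ k) : 0 < cL δ k := by
  linarith [cL_ge hδ hk]

lemma cC_pos {B : ℝ} (hB : 0 < B) (k : ℕ) : 0 < cC B k := by
  unfold cC; positivity

lemma cr_pos {B δ : ℝ} (hB : 0 < B) (hδ : 0 < δ) {k : ℕ} (hk : 1 ≤ k) : 0 < cr B δ k :=
  div_pos (cL_pos hδ hk) (cC_pos hB k)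

lemma subst_integral {k c M A : ℝ} (hk : 0 < k) (hc : 0 < c) (hA : 0 < A)
    (hM : k ^ 2 * c ^ 2 - 1 / 4 = M) (hM0 : 0 < M) (s : ℂ) :
    ∫ u in Set.Ioi c, ((k ^ 2 * u ^ 2 - 1 / 4 : ℝ) : ℂ) ^ (-s) * ((u / (u ^ 2 + A) : ℝ) : ℂ) =
      1 / 2 * ((M / (1 / 4 + A * k ^ 2) : ℝ) : ℂ) * (M : ℂ) ^ (-s) *
        jup (M / (1 / 4 + A * k ^ 2)) s := by
  have himg : (fun u : ℝ => (k ^ 2 * u ^ 2 - 1 / 4) / M) '' (Set.Ioi c) = Set.Ioi 1 := by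
    ext t
    simp only [Set.mem_image, Set.mem_Ioi]
    constructor
    · rintro ⟨x, hx, rfl⟩
      rw [lt_div_iff₀ hM0, ← hM]
      have : k ^ 2 * c ^ 2 < k ^ 2 * x ^ 2 := by gcongr
      linarith
    · intro ht
      have ht0 : 0 < t := by linarith
      refine ⟨Real.sqrt ((M * t + 1 / 4) / k ^ 2), ?_, ?_⟩
      · apply Real.lt_sqrt_of_sq_lt
        rw [lt_div_iff₀ (by positivity)]
        nlinarith
      · rw [Real.sq_sqrt (by positivity)]
        field_simp
        ring
  rw [jup_eq, ← himg, integral_image_eq_integral_abs_deriv_smul (f' := fun u => 2 * k ^ 2 * u / M)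
    measurableSet_Ioi, ← integral_const_mul]
  · apply setIntegral_congr_fun measurableSet_Ioi
    intro u hu
    have hu : c < u := hu
    have hu0 : 0 < u := hc.trans hu
    have hy : 0 < k ^ 2 * u ^ 2 - 1 / 4 := by
      have : k ^ 2 * c ^ 2 < k ^ 2 * u ^ 2 := by gcongr
      linarith
    simp only
    rw [cpow_real_div hy hM0, neg_neg, abs_of_pos (by positivity), Complex.real_smul]
    have hMc : (M : ℂ) ≠ 0 := by exact_mod_cast hM0.ne'
    have hp : (M : ℂ) ^ (-s) * (M : ℂ) ^ s = 1 := by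
      rw [← Complex.cpow_add _ _ hMc]; simp
    have hreal : u / (u ^ 2 + A) = 1 / 2 * (M / (1 / 4 + A * k ^ 2)) * (2 * k ^ 2 * u / M *
        (1 + M / (1 / 4 + A * k ^ 2) * ((k ^ 2 * u ^ 2 - 1 / 4) / M))⁻¹) := by
      have e : 1 + M / (1 / 4 + A * k ^ 2) * ((k ^ 2 * u ^ 2 - 1 / 4) / M) =
          k ^ 2 * (u ^ 2 + A) / (1 / 4 + A * k ^ 2) := by
        field_simp; ring
      rw [e, inv_div]
      field_simp
    rw [hreal]
    push_cast
    linear_combination (-1 : ℂ) * (1 / 2 * (M / (1 / 4 + A * k ^ 2)) * (2 * k ^ 2 * u / M *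
        (1 + M / (1 / 4 + A * k ^ 2) * ((k ^ 2 * u ^ 2 - 1 / 4) / M))⁻¹) *
        ((k:ℂ) ^ 2 * u ^ 2 - 1 / 4) ^ (-s)) * hp
  · intro x hx
    have := ((((hasDerivAt_pow 2 x).const_mul (k ^ 2)).sub_const (1 / 4)).div_const M).hasDerivWithinAt
      (s := Set.Ioi c)
    convert! this using 1
    simp; ring
  · intro x hx y hy hxy
    have hx0 : 0 < x := hc.trans hx
    have hy0 : 0 < y := hc.trans hy
    simp only at hxy
    rw [div_left_inj' hM0.ne', sub_left_inj, mul_right_inj' (by positivity)] at hxy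
    exact (pow_left_inj₀ hx0.le hy0.le two_ne_zero).1 hxy

lemma cuspE0_eq {a δ : ℝ} (ha : 0 < a) (hδ : 0 < δ) {k : ℕ} (hk : 1 ≤ k) (s : ℂ) :
    cuspE0 a δ k s = -(Complex.sin (Real.pi * s) / (2 * Real.pi)) *
      ((cr ((2 * Real.pi * a) ^ 2) δ k : ℂ) * (cL δ k : ℂ) ^ (-s) *
        jup (cr ((2 * Real.pi * a) ^ 2) δ k) s) := by
  have hk0 : (0:ℝ) < k := by exact_mod_cast hk
  have hA : 0 < (2 * Real.pi * a) ^ 2 := by have := Real.pi_pos; positivity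
  have hM : (k:ℝ) ^ 2 * ((k : ℝ) ^ (δ - 1)) ^ 2 - 1 / 4 = cL δ k := by
    unfold cL
    congr 1
    rw [← Real.rpow_natCast, ← Real.rpow_natCast, ← Real.rpow_mul hk0.le, ← Real.rpow_add hk0]
    congr 1; push_cast; ring
  rw [cuspE0, subst_integral hk0 (Real.rpow_pos_of_pos hk0 _) hA hM (cL_pos hδ hk)]
  unfold cr cC
  have hpi : (Real.pi : ℂ) ≠ 0 := by exact_mod_cast Real.pi_ne_zero
  field_simp

lemma cuspE0_formula {a δ : ℝ} (ha : 0 < a) (hδ : 0 < δ) {k : ℕ} (hk : 1 ≤ k) {s : ℂ}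
    (h1 : 1 < s.re) (h2 : s.re < 2) :
    cuspE0 a δ k s = -(1 / 2) * (cC ((2 * Real.pi * a) ^ 2) k : ℂ) ^ (-s)
      - (Complex.sin (Real.pi * s) / (2 * Real.pi)) *
      ((cr ((2 * Real.pi * a) ^ 2) δ k : ℂ) * (cL δ k : ℂ) ^ (-s) *
        (1 / (s - 1) + cr ((2 * Real.pi * a) ^ 2) δ k * hlow (cr ((2 * Real.pi * a) ^ 2) δ k) s)) := by
  have hA : 0 < (2 * Real.pi * a) ^ 2 := by have := Real.pi_pos; positivity
  have hr := cr_pos hA hδ hk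
  have hL := cL_pos hδ hk
  have hC := cC_pos hA k
  rw [cuspE0_eq ha hδ hk, jup_formula hr h1 h2]
  generalize (2 * Real.pi * a) ^ 2 = B at *
  have hp : (cC B k : ℂ) ^ (-s) = (cr B δ k : ℂ) *
      (cL δ k : ℂ) ^ (-s) * (cr B δ k : ℂ) ^ (s - 1) := by
    have hrc : (cr B δ k : ℂ) ≠ 0 := by exact_mod_cast hr.ne'
    have hLc : (cL δ k : ℂ) ≠ 0 := by exact_mod_cast hL.ne'
    have e : (cr B δ k : ℂ) ^ s = (cL δ k : ℂ) ^ s * (cC B k : ℂ) ^ (-s) := by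
      rw [cr, cpow_real_div hL hC]
    have e2 : (cL δ k : ℂ) ^ (-s) * (cL δ k : ℂ) ^ s = 1 := by
      rw [← Complex.cpow_add _ _ hLc]; simp
    rw [Complex.cpow_sub _ _ hrc, Complex.cpow_one, e]
    field_simp
    linear_combination (-1 : ℂ) * (cC B k : ℂ) ^ (-s) * e2
  rw [hp]
  have hs := sin_ne h1 h2
  have hpi : (Real.pi : ℂ) ≠ 0 := by exact_mod_cast Real.pi_ne_zero
  field_simp
  ring

/-- Identity theorem for meromorphic functions on a connected set. -/
lemma mero_ident {f g : ℂ → ℂ} {U V : Set ℂ} (hU : IsConnected U) (hVo : IsOpen V)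
    (hVU : V ⊆ U) (hVne : V.Nonempty) (hf : MeromorphicOn f U) (hg : MeromorphicOn g U)
    (hfg : Set.EqOn f g V) {z : ℂ} (hz : z ∈ U) : f =ᶠ[𝓝[≠] z] g := by
  have hd : MeromorphicOn (f - g) U := fun x hx => (hf x hx).sub (hg x hx)
  obtain ⟨v, hv⟩ := hVne
  have h1 : meromorphicOrderAt (f - g) v = ⊤ := by
    rw [meromorphicOrderAt_eq_top_iff]
    apply eventually_nhdsWithin_of_eventually_nhds
    filter_upwards [hVo.mem_nhds hv] with x hx
    simp [hfg hx]
  have h2 : meromorphicOrderAt (f - g) z = ⊤ := by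
    by_contra h
    have := (hd.exists_meromorphicOrderAt_ne_top_iff_forall hU).1 ⟨⟨z, hz⟩, h⟩ ⟨v, hVU hv⟩
    exact this h1
  rw [meromorphicOrderAt_eq_top_iff] at h2
  filter_upwards [h2] with x hx
  simpa [sub_eq_zero] using hx

lemma nf_eq_of_analyticAt {f : ℂ → ℂ} {z : ℂ} (h : AnalyticAt ℂ f z) :
    toMeromorphicNFAt f z z = f z := by
  rw [toMeromorphicNFAt_eq_self.2 h.meromorphicNFAt]

/-- Gluing of meromorphic functions on a cover. -/
lemma glue {U : ℕ → Set ℂ} {G : ℕ → ℂ → ℂ} {V : Set ℂ} (hUo : ∀ n, IsOpen (U n))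
    (hUc : ∀ n m, IsConnected (U n ∩ U m)) (hcov : ∀ z, ∃ n, z ∈ U n)
    (hG : ∀ n, MeromorphicOn (G n) (U n)) (hVo : IsOpen V) (hVne : V.Nonempty)
    (hV : ∀ n, V ⊆ U n) (heq : ∀ n m, Set.EqOn (G n) (G m) V) :
    ∃ F : ℂ → ℂ, ∀ n, ∀ z ∈ U n, F =ᶠ[𝓝[≠] z] G n ∧ (AnalyticAt ℂ (G n) z → F z = G n z) := by
  choose N hN using hcov
  refine ⟨fun z => toMeromorphicNFAt (G (N z)) z z, fun n z hz => ?_⟩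
  have key : ∀ w ∈ U n, toMeromorphicNFAt (G (N w)) w w = toMeromorphicNFAt (G n) w w := by
    intro w hw
    have h1 : G (N w) =ᶠ[𝓝[≠] w] G n :=
      mero_ident (hUc (N w) n) hVo (Set.subset_inter (hV _) (hV _)) hVne
        (fun x hx => hG _ x hx.1) (fun x hx => hG _ x hx.2) (heq _ _) ⟨hN w, hw⟩
    exact (toMeromorphicNFAt_eventuallyEq_nhds_congr h1).self_of_nhds
  refine ⟨?_, fun ha => ?_⟩
  · have h1 : ∀ᶠ w in 𝓝[≠] z, AnalyticAt ℂ (G n) w := (hG n z hz).eventually_analyticAt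
    filter_upwards [h1, eventually_nhdsWithin_of_eventually_nhds ((hUo n).mem_nhds hz)] with w h2 h3
    rw [key w h3, nf_eq_of_analyticAt h2]
  · simp only [key z hz, nf_eq_of_analyticAt ha]

lemma zeta_mero (z : ℂ) : MeromorphicAt riemannZeta z := by
  by_cases h : z = 1
  · subst h
    have h1 : MeromorphicAt (fun s => (s-1)⁻¹ + riemannZeta₀ s) 1 := by
      apply MeromorphicAt.add
      · fun_prop
      · exact (differentiable_riemannZeta₀.analyticAt 1).meromorphicAt
    refine h1.congr ?_
    filter_upwards [self_mem_nhdsWithin] with s hs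
    exact (riemannZeta_eq_inv_sub_add hs).symm
  · apply AnalyticAt.meromorphicAt
    apply DifferentiableOn.analyticAt (s := {1}ᶜ)
    · intro s hs
      exact (differentiableAt_riemannZeta hs).differentiableWithinAt
    · exact isOpen_compl_singleton.mem_nhds h

/-- Bounded holomorphic coefficient functions. -/
def Coef (U : Set ℂ) (c : ℂ → ℂ) : Prop :=
  DifferentiableOn ℂ c U ∧ ∃ K : ℝ, ∀ s ∈ U, ‖c s‖ ≤ K

lemma Coef.mul {U : Set ℂ} {c d : ℂ → ℂ} (hc : Coef U c) (hd : Coef U d) :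
    Coef U (fun s => c s * d s) := by
  obtain ⟨h1, K, hK⟩ := hc
  obtain ⟨h2, K', hK'⟩ := hd
  refine ⟨h1.mul h2, K * K', fun s hs => ?_⟩
  rw [norm_mul]
  exact mul_le_mul (hK s hs) (hK' s hs) (norm_nonneg _) ((norm_nonneg _).trans (hK s hs))

lemma Coef.const (U : Set ℂ) (c : ℂ) : Coef U (fun _ => c) :=
  ⟨differentiableOn_const c, ‖c‖, fun _ _ => le_rfl⟩

/-- Finite combinations of powers of `k` with coefficients holomorphic in `s`. -/
inductive PolyK (U : Set ℂ) : (ℕ → ℂ → ℂ) → Prop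
  | term (c : ℂ → ℂ) (α β : ℝ) (hc : Coef U c) (hβ : β ≤ 0) (hαβ : α + β ≤ 0) :
      PolyK U (fun k s => c s * (k : ℂ) ^ ((α : ℂ) + β * s))
  | add (p q : ℕ → ℂ → ℂ) (hp : PolyK U p) (hq : PolyK U q) : PolyK U (fun k s => p k s + q k s)

lemma PolyK.congr {U : Set ℂ} {p q : ℕ → ℂ → ℂ} (hp : PolyK U p) (h : p = q) : PolyK U q := h ▸ hp

/-- Two sequences agree for `k ≥ 1`. -/
lemma polyK_mul {U : Set ℂ} {p q : ℕ → ℂ → ℂ} (hp : PolyK U p) (hq : PolyK U q) :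
    ∃ m, PolyK U m ∧ ∀ k ≥ 1, ∀ s, p k s * q k s = m k s := by
  induction hp with
  | term c α β hc hβ hαβ =>
    induction hq with
    | term d α' β' hd hβ' hαβ' =>
      refine ⟨_, PolyK.term (fun s => c s * d s) (α + α') (β + β') (hc.mul hd) (by linarith) (by linarith),
        fun k hk s => ?_⟩
      have hk0 : (k : ℂ) ≠ 0 := by exact_mod_cast (by omega : k ≠ 0)
      rw [show (((α + α' : ℝ) : ℂ) + ((β + β' : ℝ) : ℂ) * s) = ((α : ℂ) + β * s) + ((α' : ℂ) + β' * s) by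
        push_cast; ring, Complex.cpow_add _ _ hk0]
      ring
    | add p q hp hq ihp ihq =>
      obtain ⟨m1, h1, e1⟩ := ihp
      obtain ⟨m2, h2, e2⟩ := ihq
      exact ⟨_, PolyK.add m1 m2 h1 h2, fun k hk s => by rw [← e1 k hk, ← e2 k hk]; ring⟩
  | add p q hp hq ihp ihq =>
    obtain ⟨m1, h1, e1⟩ := ihp
    obtain ⟨m2, h2, e2⟩ := ihq
    exact ⟨_, PolyK.add m1 m2 h1 h2, fun k hk s => by rw [← e1 k hk, ← e2 k hk]; ring⟩

lemma norm_natpow_le {R α β : ℝ} {k : ℕ} (hk : 1 ≤ k) {s : ℂ} (hs : ‖s‖ ≤ R) :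
    ‖(k : ℂ) ^ ((α : ℂ) + β * s)‖ ≤ (k : ℝ) ^ (|α| + |β| * R) := by
  have hk1 : (1:ℝ) ≤ k := by exact_mod_cast hk
  rw [Complex.norm_natCast_cpow_of_pos hk]
  apply Real.rpow_le_rpow_of_exponent_le hk1
  simp only [Complex.add_re, Complex.ofReal_re, Complex.mul_re, Complex.ofReal_im, zero_mul, sub_zero]
  have h1 : β * s.re ≤ |β| * R := by
    calc β * s.re ≤ |β * s.re| := le_abs_self _
      _ = |β| * |s.re| := abs_mul _ _
      _ ≤ |β| * R := by
        gcongr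
        exact (Complex.abs_re_le_norm s).trans hs
  linarith [le_abs_self α]

lemma rpow_mono_nat {k : ℕ} (hk : 1 ≤ k) {x y : ℝ} (h : x ≤ y) : (k : ℝ) ^ x ≤ (k : ℝ) ^ y :=
  Real.rpow_le_rpow_of_exponent_le (by exact_mod_cast hk) h

lemma polyK_growth {U : Set ℂ} {R : ℝ} (hU : ∀ s ∈ U, ‖s‖ ≤ R) {p : ℕ → ℂ → ℂ} (hp : PolyK U p) :
    ∃ (K : ℝ) (m : ℕ), 0 ≤ K ∧ ∀ k ≥ 1, ∀ s ∈ U, ‖p k s‖ ≤ K * (k : ℝ) ^ (m : ℝ) := by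
  induction hp with
  | term c α β hc hβ hαβ =>
    obtain ⟨h1, K, hK⟩ := hc
    obtain ⟨m, hm⟩ := exists_nat_ge (|α| + |β| * R)
    refine ⟨|K|, m, abs_nonneg _, fun k hk s hs => ?_⟩
    rw [norm_mul]
    exact mul_le_mul ((hK s hs).trans (le_abs_self _))
      ((norm_natpow_le hk (hU s hs)).trans (rpow_mono_nat hk hm)) (norm_nonneg _) (abs_nonneg _)
  | add p q hp hq ihp ihq =>
    obtain ⟨K1, m1, h1, e1⟩ := ihp
    obtain ⟨K2, m2, h2, e2⟩ := ihq
    refine ⟨K1 + K2, max m1 m2, by positivity, fun k hk s hs => (norm_add_le _ _).trans ?_⟩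
    rw [add_mul]
    have a1 : (m1 : ℝ) ≤ ((max m1 m2 : ℕ) : ℝ) := by exact_mod_cast le_max_left _ _
    have a2 : (m2 : ℝ) ≤ ((max m1 m2 : ℕ) : ℝ) := by exact_mod_cast le_max_right _ _
    have b1 := mul_le_mul_of_nonneg_left (rpow_mono_nat hk a1) h1
    have b2 := mul_le_mul_of_nonneg_left (rpow_mono_nat hk a2) h2
    exact add_le_add ((e1 k hk s hs).trans b1) ((e2 k hk s hs).trans b2)

/-- Sequences with an asymptotic expansion in powers of `k`. -/
def ExpK (U : Set ℂ) (f : ℕ → ℂ → ℂ) : Prop :=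
  ∀ M : ℕ, ∃ p, PolyK U p ∧ ∃ K : ℝ, 0 ≤ K ∧ ∀ k ≥ 1, ∀ s ∈ U, ‖f k s - p k s‖ ≤ K * (k : ℝ) ^ (-(M : ℝ))

lemma PolyK.expK {U : Set ℂ} {p : ℕ → ℂ → ℂ} (hp : PolyK U p) : ExpK U p :=
  fun M => ⟨p, hp, 0, le_rfl, fun k hk s hs => by simp⟩

lemma ExpK.congr {U : Set ℂ} {f g : ℕ → ℂ → ℂ} (hf : ExpK U f)
    (h : ∀ k ≥ 1, ∀ s ∈ U, f k s = g k s) : ExpK U g := by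
  intro M
  obtain ⟨p, hp, K, hK, hb⟩ := hf M
  exact ⟨p, hp, K, hK, fun k hk s hs => by rw [← h k hk s hs]; exact hb k hk s hs⟩

lemma ExpK.coef {U : Set ℂ} {c : ℂ → ℂ} (hc : Coef U c) : ExpK U (fun _ s => c s) := by
  refine (PolyK.term c 0 0 hc le_rfl (by simp)).expK.congr (fun k hk s hs => by simp)

lemma ExpK.add {U : Set ℂ} {f g : ℕ → ℂ → ℂ} (hf : ExpK U f) (hg : ExpK U g) :
    ExpK U (fun k s => f k s + g k s) := by
  intro M
  obtain ⟨p, hp, K, hK, hb⟩ := hf M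
  obtain ⟨q, hq, K', hK', hb'⟩ := hg M
  refine ⟨_, PolyK.add p q hp hq, K + K', by positivity, fun k hk s hs => ?_⟩
  rw [show f k s + g k s - (p k s + q k s) = (f k s - p k s) + (g k s - q k s) by ring, add_mul]
  exact (norm_add_le _ _).trans (add_le_add (hb k hk s hs) (hb' k hk s hs))

lemma ExpK.growth {U : Set ℂ} {R : ℝ} (hU : ∀ s ∈ U, ‖s‖ ≤ R) {f : ℕ → ℂ → ℂ} (hf : ExpK U f) :
    ∃ (K : ℝ) (m : ℕ), 0 ≤ K ∧ ∀ k ≥ 1, ∀ s ∈ U, ‖f k s‖ ≤ K * (k : ℝ) ^ (m : ℝ) := by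
  obtain ⟨p, hp, K, hK, hb⟩ := hf 0
  obtain ⟨K', m, hK', hb'⟩ := polyK_growth hU hp
  refine ⟨K + K', m, by positivity, fun k hk s hs => ?_⟩
  rw [show f k s = (f k s - p k s) + p k s by ring, add_mul]
  refine (norm_add_le _ _).trans (add_le_add ((hb k hk s hs).trans ?_) (hb' k hk s hs))
  exact mul_le_mul_of_nonneg_left (rpow_mono_nat hk (by simp)) hK

lemma mul_decay {k : ℕ} (hk : 1 ≤ k) {x y K K' : ℝ} {m M : ℕ} (hx0 : 0 ≤ x) (hK' : 0 ≤ K')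
    (hx : x ≤ K * (k : ℝ) ^ (m : ℝ)) (hy : y ≤ K' * (k : ℝ) ^ (-((M + m : ℕ) : ℝ))) :
    x * y ≤ K * K' * (k : ℝ) ^ (-(M : ℝ)) := by
  have hk0 : (0:ℝ) < k := by exact_mod_cast hk
  calc x * y ≤ x * (K' * (k : ℝ) ^ (-((M + m : ℕ) : ℝ))) := by gcongr
    _ ≤ (K * (k : ℝ) ^ (m : ℝ)) * (K' * (k : ℝ) ^ (-((M + m : ℕ) : ℝ))) := by gcongr
    _ = K * K' * ((k : ℝ) ^ (m : ℝ) * (k : ℝ) ^ (-((M + m : ℕ) : ℝ))) := by ring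
    _ = _ := by
      rw [← Real.rpow_add hk0]; congr 2; push_cast; ring

lemma ExpK.mul {U : Set ℂ} {R : ℝ} (hU : ∀ s ∈ U, ‖s‖ ≤ R) {f g : ℕ → ℂ → ℂ}
    (hf : ExpK U f) (hg : ExpK U g) : ExpK U (fun k s => f k s * g k s) := by
  intro M
  obtain ⟨K1, m1, hK1, b1⟩ := hf.growth hU
  obtain ⟨q, hq, K2, hK2, b2⟩ := hg (M + m1)
  obtain ⟨K3, m3, hK3, b3⟩ := polyK_growth hU hq
  obtain ⟨p, hp, K4, hK4, b4⟩ := hf (M + m3)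
  obtain ⟨m, hm, em⟩ := polyK_mul hp hq
  refine ⟨m, hm, K1 * K2 + K3 * K4, by positivity, fun k hk s hs => ?_⟩
  rw [← em k hk, show f k s * g k s - p k s * q k s = f k s * (g k s - q k s) + q k s * (f k s - p k s) by ring,
    add_mul]
  refine (norm_add_le _ _).trans ?_
  rw [norm_mul, norm_mul]
  exact add_le_add (mul_decay hk (norm_nonneg _) hK2 (b1 k hk s hs) (b2 k hk s hs))
    (mul_decay hk (norm_nonneg _) hK4 (b3 k hk s hs) (b4 k hk s hs))

lemma ExpK.pow {U : Set ℂ} {R : ℝ} (hU : ∀ s ∈ U, ‖s‖ ≤ R) {f : ℕ → ℂ → ℂ}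
    (hf : ExpK U f) (n : ℕ) : ExpK U (fun k s => f k s ^ n) := by
  induction n with
  | zero => simpa using ExpK.coef (Coef.const U 1)
  | succ n ih =>
    refine (ih.mul hU hf).congr (fun k hk s hs => by ring)

lemma ExpK.sum {U : Set ℂ} {f : ℕ → ℕ → ℂ → ℂ} (N : ℕ) (hf : ∀ n, ExpK U (f n)) :
    ExpK U (fun k s => ∑ n ∈ Finset.range N, f n k s) := by
  induction N with
  | zero => simpa using ExpK.coef (Coef.const U 0)
  | succ n ih => exact (ih.add (hf n)).congr (fun k hk s hs => by rw [Finset.sum_range_succ])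

/-- Composition with a function having a Taylor expansion at zero. -/
lemma ExpK.comp {U : Set ℂ} {R : ℝ} (hU : ∀ s ∈ U, ‖s‖ ≤ R) {r : ℕ → ℝ} {g : ℕ → ℂ → ℂ}
    (hr : ExpK U (fun k _ => (r k : ℂ))) {γ Kr : ℝ} (hγ : 0 < γ)
    (hrb : ∀ k ≥ 1, |r k| ≤ Kr * (k : ℝ) ^ (-γ))
    (hg : ∀ N : ℕ, ∃ c : ℕ → ℂ → ℂ, (∀ n, Coef U (c n)) ∧ ∃ K : ℝ, 0 ≤ K ∧ ∀ k ≥ 1, ∀ s ∈ U,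
      ‖g k s - ∑ n ∈ Finset.range N, c n s * (r k : ℂ) ^ n‖ ≤ K * |r k| ^ N) : ExpK U g := by
  intro M
  obtain ⟨N, hN⟩ := exists_nat_ge (M / γ)
  obtain ⟨c, hc, K, hK, hb⟩ := hg N
  have h1 : ExpK U (fun k s => ∑ n ∈ Finset.range N, c n s * (r k : ℂ) ^ n) :=
    ExpK.sum (f := fun n k s => c n s * (r k : ℂ) ^ n) N
      (fun n => (ExpK.coef (hc n)).mul hU (hr.pow hU n))
  obtain ⟨p, hp, K', hK', hb'⟩ := h1 M
  have hKr : 0 ≤ Kr := by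
    have := hrb 1 le_rfl
    simp at this
    exact (abs_nonneg _).trans this
  refine ⟨p, hp, K * Kr ^ N + K', by positivity, fun k hk s hs => ?_⟩
  rw [← sub_add_sub_cancel, add_mul]
  refine (norm_add_le _ _).trans (add_le_add ((hb k hk s hs).trans ?_) (hb' k hk s hs))
  have hk0 : (0:ℝ) < k := by exact_mod_cast hk
  rw [mul_assoc]
  apply mul_le_mul_of_nonneg_left _ hK
  calc |r k| ^ N ≤ (Kr * (k : ℝ) ^ (-γ)) ^ N := pow_le_pow_left₀ (abs_nonneg _) (hrb k hk) N
    _ = Kr ^ N * (k : ℝ) ^ (-γ * N) := by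
      rw [mul_pow, ← Real.rpow_natCast (_ ^ (-γ)), ← Real.rpow_mul hk0.le]
    _ ≤ Kr ^ N * (k : ℝ) ^ (-(M : ℝ)) := by
      apply mul_le_mul_of_nonneg_left _ (by positivity)
      apply rpow_mono_nat hk
      rw [div_le_iff₀ hγ] at hN
      linarith

lemma polyK_diff {U : Set ℂ} {p : ℕ → ℂ → ℂ} (hp : PolyK U p) {k : ℕ} (hk : 1 ≤ k) :
    DifferentiableOn ℂ (p k) U := by
  induction hp with
  | term c α β hc hβ hαβ =>
    apply hc.1.mul
    have hk0 : (k : ℂ) ≠ 0 := by exact_mod_cast (by omega : k ≠ 0)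
    intro s hs
    apply DifferentiableAt.differentiableWithinAt
    apply DifferentiableAt.const_cpow (by fun_prop) (Or.inl hk0)
  | add p q hp hq ihp ihq => exact ihp.add ihq

lemma polyK_sum {U : Set ℂ} (hUo : IsOpen U) {p : ℕ → ℂ → ℂ} (hp : PolyK U p) :
    ∃ G : ℂ → ℂ, MeromorphicOn G U ∧ ∀ s ∈ U, 1 < s.re →
      HasSum (fun k : ℕ => (((k + 1 : ℕ) : ℂ) ^ 2)⁻¹ * p (k + 1) s) (G s) := by
  induction hp with
  | term c α β hc hβ hαβ =>
    refine ⟨fun s => c s * riemannZeta (2 - α - β * s), ?_, ?_⟩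
    · intro s hs
      apply MeromorphicAt.mul
      · exact (hc.1.analyticAt (hUo.mem_nhds hs)).meromorphicAt
      · exact (zeta_mero (2 - α - β * s)).comp_analyticAt (g := fun s : ℂ => 2 - α - β * s) (by fun_prop)
    · intro s hs h1
      have hre : 1 < (2 - (α:ℂ) - β * s).re := by
        simp
        nlinarith
      have hsum : Summable (fun n : ℕ => 1 / ((n : ℂ) + 1) ^ (2 - (α:ℂ) - β * s)) := by
        have := (summable_nat_add_iff 1).2 (Complex.summable_one_div_nat_cpow.2 hre)
        simpa using this
      have h2 := hsum.hasSum
      rw [← zeta_eq_tsum_one_div_nat_add_one_cpow hre] at h2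
      convert! h2.mul_left (c s) using 1
      funext k
      have hk0 : ((k + 1 : ℕ) : ℂ) ≠ 0 := by exact_mod_cast (by omega : k + 1 ≠ 0)
      have e : ((k + 1 : ℕ) : ℂ) ^ ((α : ℂ) + β * s) = ((k + 1 : ℕ) : ℂ) ^ (2:ℂ) *
          ((k + 1 : ℕ) : ℂ) ^ (-(2 - (α:ℂ) - β * s)) := by
        rw [← Complex.cpow_add _ _ hk0]; congr 1; ring
      beta_reduce
      rw [e, show (2:ℂ) = ((2:ℕ) : ℂ) by norm_num, Complex.cpow_natCast, Complex.cpow_neg]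
      push_cast at hk0 ⊢
      field_simp
  | add p q hp hq ihp ihq =>
    obtain ⟨G1, h1, e1⟩ := ihp
    obtain ⟨G2, h2, e2⟩ := ihq
    refine ⟨fun s => G1 s + G2 s, fun s hs => (h1 s hs).add (h2 s hs), fun s hs hs1 => ?_⟩
    convert! (e1 s hs hs1).add (e2 s hs hs1) using 1
    funext k; ring

lemma summable_inv_sq : Summable (fun k : ℕ => (((k + 1 : ℕ) : ℝ) ^ 2)⁻¹) := by
  have := (summable_nat_add_iff 1).2 (Real.summable_nat_pow_inv (p := 2).2 (by norm_num))
  simpa using this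

/-- Meromorphic continuation of the sum of a sequence with an expansion. -/
lemma ExpK.continuation {U : Set ℂ} (hUo : IsOpen U) {f : ℕ → ℂ → ℂ} (hf : ExpK U f)
    (hd : ∀ k ≥ 1, DifferentiableOn ℂ (f k) U) :
    ∃ G : ℂ → ℂ, MeromorphicOn G U ∧ ∀ s ∈ U, 1 < s.re →
      HasSum (fun k : ℕ => (((k + 1 : ℕ) : ℂ) ^ 2)⁻¹ * f (k + 1) s) (G s) := by
  obtain ⟨p, hp, K, hK, hb⟩ := hf 0
  obtain ⟨G1, h1, e1⟩ := polyK_sum hUo hp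
  have hbound : ∀ (k : ℕ) (s : ℂ), s ∈ U → ‖(((k + 1 : ℕ) : ℂ) ^ 2)⁻¹ * (f (k + 1) s - p (k + 1) s)‖ ≤
      (((k + 1 : ℕ) : ℝ) ^ 2)⁻¹ * K := by
    intro k s hs
    rw [norm_mul]
    have := hb (k + 1) (by omega) s hs
    simp only [CharP.cast_eq_zero, neg_zero, Real.rpow_zero, mul_one] at this
    apply mul_le_mul _ this (norm_nonneg _) (by positivity)
    rw [norm_inv, norm_pow, Complex.norm_natCast]
  have hsum := summable_inv_sq.mul_right K
  have hdiff := Complex.differentiableOn_tsum_of_summable_norm (U := U) hsum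
    (F := fun k s => (((k + 1 : ℕ) : ℂ) ^ 2)⁻¹ * (f (k + 1) s - p (k + 1) s))
    (fun k => (((hd (k + 1) (by omega)).sub (polyK_diff hp (by omega))).const_mul _)) hUo hbound
  refine ⟨_, fun s hs => (h1 s hs).add (hdiff.analyticAt (hUo.mem_nhds hs)).meromorphicAt, ?_⟩
  intro s hs hs1
  have h3 : Summable (fun k : ℕ => (((k + 1 : ℕ) : ℂ) ^ 2)⁻¹ * (f (k + 1) s - p (k + 1) s)) :=
    Summable.of_norm_bounded hsum (fun k => hbound k s hs)
  convert! (e1 s hs hs1).add h3.hasSum using 1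
  funext k; ring

/-- Binomial coefficient functions. -/
noncomputable def bcoef : ℕ → ℂ → ℂ
  | 0, _ => 1
  | n + 1, w => w * bcoef n (w - 1) / (n + 1)

lemma bcoef_diff (n : ℕ) : Differentiable ℂ (bcoef n) := by
  induction n with
  | zero => exact differentiable_const _
  | succ n ih =>
    have : bcoef (n + 1) = fun w => w * bcoef n (w - 1) / (n + 1) := rfl
    rw [this]
    have h2 : Differentiable ℂ (fun w => bcoef n (w - 1)) := ih.comp (by fun_prop)
    fun_prop

lemma bcoef_coef {U : Set ℂ} {R : ℝ} (hU : ∀ s ∈ U, ‖s‖ ≤ R) (n : ℕ) {w : ℂ → ℂ}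
    (hw : Differentiable ℂ w) : Coef U (fun s => bcoef n (w s)) := by
  have hd : Differentiable ℂ (fun s => bcoef n (w s)) := (bcoef_diff n).comp hw
  refine ⟨hd.differentiableOn, ?_⟩
  obtain ⟨K, hK⟩ := (isCompact_closedBall (0:ℂ) R).exists_bound_of_continuousOn hd.continuous.continuousOn
  exact ⟨K, fun s hs => hK s (by simpa using hU s hs)⟩

lemma one_add_cpow_bound {X R : ℝ} {w : ℂ} (hw : ‖w‖ ≤ R) {x : ℝ}
    (hx : -1 / 4 ≤ x) (hX : x ≤ X) : ‖((1 + x : ℝ) : ℂ) ^ w‖ ≤ Real.exp (R * (4 + |X|)) := by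
  have h1 : 0 < 1 + x := by linarith
  have hR : 0 ≤ R := (norm_nonneg _).trans hw
  rw [Complex.norm_cpow_eq_rpow_re_of_pos h1, Real.rpow_def_of_pos h1]
  apply Real.exp_le_exp.2
  have h2 : Real.log (1 + x) ≤ |X| := by
    have := Real.log_le_sub_one_of_pos h1
    have := le_abs_self X
    linarith
  have h3 : -4 ≤ Real.log (1 + x) := by
    have := Real.one_sub_inv_le_log_of_pos h1
    have h4 : (1 + x)⁻¹ ≤ 2 := by
      rw [inv_le_comm₀ h1 (by norm_num)]; linarith
    linarith
  calc Real.log (1 + x) * w.re ≤ |Real.log (1 + x) * w.re| := le_abs_self _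
    _ = |w.re| * |Real.log (1 + x)| := by rw [abs_mul, mul_comm]
    _ ≤ R * (4 + |X|) := by
      apply mul_le_mul ((Complex.abs_re_le_norm w).trans hw) _ (abs_nonneg _) hR
      rw [abs_le]; constructor <;> linarith [abs_nonneg X]

/-- Taylor expansion of `(1+x)^w` with uniform remainder. -/
lemma one_add_cpow_taylor {X : ℝ} (hX0 : 0 ≤ X) (N : ℕ) : ∀ R : ℝ, ∃ K : ℝ, 0 ≤ K ∧ ∀ w : ℂ, ‖w‖ ≤ R →
    ∀ x : ℝ, -1 / 4 ≤ x → x ≤ X →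
      ‖((1 + x : ℝ) : ℂ) ^ w - ∑ n ∈ Finset.range N, bcoef n w * (x : ℂ) ^ n‖ ≤ K * |x| ^ N := by
  induction N with
  | zero =>
    intro R
    refine ⟨Real.exp (R * (4 + |X|)), (Real.exp_pos _).le, fun w hw x hx hX => ?_⟩
    simpa using one_add_cpow_bound hw hx hX
  | succ N ih =>
    intro R
    obtain ⟨K, hK, hb⟩ := ih (R + 1)
    refine ⟨|R| * K, by positivity, fun w hw x hx hX => ?_⟩
    let g : ℝ → ℂ := fun y => ((1 + y : ℝ) : ℂ) ^ w - ∑ n ∈ Finset.range (N + 1), bcoef n w * (y : ℂ) ^ n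
    have hg0 : g 0 = 0 := by
      simp only [g]
      rw [Finset.sum_range_succ']
      simp [bcoef]
    have hw1 : ‖w - 1‖ ≤ R + 1 := (norm_sub_le _ _).trans (by simpa using hw)
    have hseg : ∀ y ∈ Set.uIcc 0 x, (-1 / 4 ≤ y ∨ 0 ≤ y) ∧ -1/4 ≤ y ∧ (y ≤ X ∨ y ≤ 0) ∧ |y| ≤ |x| := by
      intro y hy
      rcases le_total 0 x with h | h
      · rw [Set.uIcc_of_le h] at hy
        refine ⟨Or.inr hy.1, by linarith [hy.1], Or.inl (by linarith [hy.2]), ?_⟩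
        rw [abs_of_nonneg hy.1, abs_of_nonneg h]; exact hy.2
      · rw [Set.uIcc_of_ge h] at hy
        refine ⟨Or.inl (by linarith [hy.1]), by linarith [hy.1], Or.inr hy.2, ?_⟩
        rw [abs_of_nonpos hy.2, abs_of_nonpos h]; linarith [hy.1]
    have hder : ∀ y ∈ Set.uIcc 0 x, HasDerivWithinAt g
        (w * (((1 + y : ℝ) : ℂ) ^ (w - 1) - ∑ n ∈ Finset.range N, bcoef n (w - 1) * (y : ℂ) ^ n))
        (Set.uIcc 0 x) y := by
      intro y hy
      have hy1 : 0 < 1 + y := by linarith [(hseg y hy).2.1]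
      apply HasDerivAt.hasDerivWithinAt
      have d1 : HasDerivAt (fun y : ℝ => ((1 + y : ℝ) : ℂ) ^ w) (w * ((1 + y : ℝ) : ℂ) ^ (w - 1)) y := by
        have hin : HasDerivAt (fun z : ℂ => (1 + z) ^ w) (w * (1 + (y : ℂ)) ^ (w - 1) * 1) (y : ℂ) :=
          ((hasDerivAt_id (y : ℂ)).const_add 1).cpow_const (by
            have := Complex.ofReal_mem_slitPlane.2 hy1
            simpa using this)
        have := hin.comp_ofReal
        simpa using this
      have d2 : HasDerivAt (fun y : ℝ => ∑ n ∈ Finset.range (N + 1), bcoef n w * (y : ℂ) ^ n)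
          (w * ∑ n ∈ Finset.range N, bcoef n (w - 1) * (y : ℂ) ^ n) y := by
        have e : (fun y : ℝ => ∑ n ∈ Finset.range (N + 1), bcoef n w * (y : ℂ) ^ n) =
            fun y : ℝ => (∑ n ∈ Finset.range N, bcoef (n + 1) w * (y : ℂ) ^ (n + 1)) + 1 := by
          funext y
          rw [Finset.sum_range_succ']; simp [bcoef]
        rw [e, Finset.mul_sum]
        apply HasDerivAt.add_const
        apply HasDerivAt.fun_sum
        intro n _
        have hp : HasDerivAt (fun y : ℝ => (y : ℂ) ^ (n + 1)) ((n + 1 : ℕ) * (y : ℂ) ^ n) y := by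
          have := (hasDerivAt_pow (n + 1) (y : ℂ)).comp_ofReal
          simpa using this
        convert! hp.const_mul (bcoef (n + 1) w) using 1
        have : (n : ℂ) + 1 ≠ 0 := by exact_mod_cast (by omega : n + 1 ≠ 0)
        simp only [bcoef]
        push_cast
        field_simp
      rw [mul_sub]
      exact d1.sub d2
    have hfin := (convex_uIcc (0:ℝ) x).norm_image_sub_le_of_norm_hasDerivWithin_le (f := g)
      (C := |R| * K * |x| ^ N) hder (fun y hy => by
        obtain ⟨_, hy1, hy2, hy3⟩ := hseg y hy
        rw [norm_mul, mul_assoc]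
        apply mul_le_mul (hw.trans (le_abs_self _)) _ (norm_nonneg _) (abs_nonneg _)
        have hyX : y ≤ X := by rcases hy2 with h | h <;> linarith
        refine (hb (w - 1) hw1 y hy1 hyX).trans ?_
        gcongr) (Set.left_mem_uIcc) (Set.right_mem_uIcc)
    rw [hg0, sub_zero, sub_zero] at hfin
    rw [pow_succ, ← mul_assoc]
    exact hfin
lemma natpow_real_cast (k : ℕ) (γ : ℝ) (s : ℂ) :
    (((k : ℝ) ^ γ : ℝ) : ℂ) = (k : ℂ) ^ ((γ : ℂ) + ((0 : ℝ) : ℂ) * s) := by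
  rw [Complex.ofReal_cpow (Nat.cast_nonneg k)]; simp

lemma expK_const_pow {U : Set ℂ} (x : ℝ) {γ : ℝ} (hγ : 0 < γ) :
    ExpK U (fun k _ => ((x * (k : ℝ) ^ (-γ) : ℝ) : ℂ)) := by
  refine (PolyK.term (fun _ => (x : ℂ)) (-γ) 0 (Coef.const U x) le_rfl (by linarith)).expK.congr ?_
  intro k hk s hs
  rw [Complex.ofReal_mul, natpow_real_cast k (-γ) s]

lemma expK_one_add {U : Set ℂ} {R : ℝ} (hU : ∀ s ∈ U, ‖s‖ ≤ R) {x γ : ℝ} (hx : -1 / 4 ≤ x)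
    (hγ : 0 < γ) {w : ℂ → ℂ} (hw : Differentiable ℂ w) :
    ExpK U (fun k s => ((1 + x * (k : ℝ) ^ (-γ) : ℝ) : ℂ) ^ (w s)) := by
  obtain ⟨W, hW⟩ := (isCompact_closedBall (0:ℂ) R).exists_bound_of_continuousOn hw.continuous.continuousOn
  refine ExpK.comp hU (expK_const_pow x hγ) hγ (Kr := |x|) ?_ ?_
  · intro k hk
    rw [abs_mul, abs_of_nonneg (by positivity : (0:ℝ) ≤ (k : ℝ) ^ (-γ))]
  · intro N
    obtain ⟨K, hK, hb⟩ := one_add_cpow_taylor (abs_nonneg x) N W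
    refine ⟨fun n s => bcoef n (w s), fun n => bcoef_coef hU n hw, K, hK, fun k hk s hs => ?_⟩
    have hk1 : (1:ℝ) ≤ k := by exact_mod_cast hk
    have h1 : (k : ℝ) ^ (-γ) ≤ 1 := Real.rpow_le_one_of_one_le_of_nonpos hk1 (by linarith)
    have h0 : 0 ≤ (k : ℝ) ^ (-γ) := by positivity
    refine hb (w s) (hW s (by simpa using hU s hs)) _ ?_ ?_
    · rcases le_or_gt 0 x with h | h
      · have := mul_nonneg h h0; linarith
      · nlinarith
    · have := mul_le_mul_of_nonneg_right (le_abs_self x) h0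
      have := mul_le_mul_of_nonneg_left h1 (abs_nonneg x)
      linarith

lemma cC_eq {B : ℝ} (hB : 0 < B) {k : ℕ} (hk : 1 ≤ k) :
    cC B k = B * (k : ℝ) ^ (2 : ℝ) * (1 + 1 / (4 * B) * (k : ℝ) ^ (-2 : ℝ)) := by
  have hk0 : (0:ℝ) < k := by exact_mod_cast hk
  rw [Real.rpow_neg hk0.le, show ((2:ℝ)) = ((2:ℕ):ℝ) by norm_num, Real.rpow_natCast]
  unfold cC
  field_simp
  push_cast
  ring

lemma cL_eq {δ : ℝ} {k : ℕ} (hk : 1 ≤ k) :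
    cL δ k = (k : ℝ) ^ (2 * δ) * (1 + (-1 / 4) * (k : ℝ) ^ (-(2 * δ))) := by
  have hk0 : (0:ℝ) < k := by exact_mod_cast hk
  have : (k:ℝ) ^ (2 * δ) ≠ 0 := by positivity
  rw [Real.rpow_neg hk0.le]
  unfold cL
  field_simp
  ring

lemma rpow_cpow {k : ℕ} (hk : 1 ≤ k) (γ : ℝ) (w : ℂ) :
    (((k : ℝ) ^ γ : ℝ) : ℂ) ^ w = (k : ℂ) ^ ((γ : ℂ) * w) := by
  have hk0 : (0:ℝ) < k := by exact_mod_cast hk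
  have hk' : (k:ℂ) ≠ 0 := by exact_mod_cast hk0.ne'
  have hp : (0:ℝ) < (k:ℝ) ^ γ := by positivity
  rw [Complex.cpow_def_of_ne_zero (by exact_mod_cast hp.ne'), Complex.cpow_def_of_ne_zero hk',
    ← Complex.ofReal_log hp.le, Real.log_rpow hk0, ← Complex.natCast_log]
  push_cast
  ring_nf

lemma one_add_pos {δ : ℝ} (hδ : 0 < δ) {k : ℕ} (hk : 1 ≤ k) :
    0 < 1 + (-1 / 4) * (k : ℝ) ^ (-(2 * δ)) := by
  have hk1 : (1:ℝ) ≤ k := by exact_mod_cast hk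
  have h1 : (k : ℝ) ^ (-(2 * δ)) ≤ 1 := Real.rpow_le_one_of_one_le_of_nonpos hk1 (by linarith)
  linarith

lemma cC_cpow {B : ℝ} (hB : 0 < B) {k : ℕ} (hk : 1 ≤ k) (w : ℂ) :
    (cC B k : ℂ) ^ w = (B : ℂ) ^ w * (k : ℂ) ^ (2 * w) *
      ((1 + 1 / (4 * B) * (k : ℝ) ^ (-2 : ℝ) : ℝ) : ℂ) ^ w := by
  have hk0 : (0:ℝ) < k := by exact_mod_cast hk
  have h2 : (0:ℝ) < (k:ℝ) ^ (2:ℝ) := by positivity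
  rw [cC_eq hB hk, cpow_real_mul (by positivity) (by positivity), cpow_real_mul hB h2,
    rpow_cpow hk]
  norm_num

lemma cL_cpow {δ : ℝ} (hδ : 0 < δ) {k : ℕ} (hk : 1 ≤ k) (w : ℂ) :
    (cL δ k : ℂ) ^ w = (k : ℂ) ^ (2 * δ * w) *
      ((1 + (-1 / 4) * (k : ℝ) ^ (-(2 * δ)) : ℝ) : ℂ) ^ w := by
  have hk0 : (0:ℝ) < k := by exact_mod_cast hk
  have h2 : (0:ℝ) < (k:ℝ) ^ (2 * δ) := by positivity
  rw [cL_eq hk, cpow_real_mul h2 (one_add_pos hδ hk), rpow_cpow hk]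
  push_cast
  rfl

lemma coef_cpow {U : Set ℂ} {R : ℝ} (hU : ∀ s ∈ U, ‖s‖ ≤ R) {B : ℝ} (hB : 0 < B) :
    Coef U (fun s => (B : ℂ) ^ (-s)) := by
  have hB' : (B:ℂ) ≠ 0 := by exact_mod_cast hB.ne'
  have hd : Differentiable ℂ (fun s : ℂ => (B : ℂ) ^ (-s)) := fun s =>
    (differentiableAt_id.neg).const_cpow (Or.inl hB')
  refine ⟨hd.differentiableOn, ?_⟩
  obtain ⟨K, hK⟩ := (isCompact_closedBall (0:ℂ) R).exists_bound_of_continuousOn hd.continuous.continuousOn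
  exact ⟨K, fun s hs => hK s (by simpa using hU s hs)⟩

lemma expK_f1 {U : Set ℂ} {R : ℝ} (hU : ∀ s ∈ U, ‖s‖ ≤ R) {B : ℝ} (hB : 0 < B) :
    ExpK U (fun k s => (k : ℂ) ^ 2 * (cC B k : ℂ) ^ (-s)) := by
  have h1 := (PolyK.term (fun s => (B : ℂ) ^ (-s)) 2 (-2) (coef_cpow hU hB) (by norm_num)
    (by norm_num)).expK
  have h2 := expK_one_add hU (x := 1 / (4 * B)) (γ := 2)
    (by have : 0 < 1 / (4 * B) := by positivity
        linarith) (by norm_num) (w := fun s => -s) (by fun_prop)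
  refine (h1.mul hU h2).congr ?_
  intro k hk s hs
  have hk' : (k:ℂ) ≠ 0 := by exact_mod_cast (by omega : k ≠ 0)
  rw [cC_cpow hB hk, Complex.cpow_add _ _ hk',
    show ((2:ℝ):ℂ) = ((2:ℕ):ℂ) by norm_num, Complex.cpow_natCast]
  push_cast
  rw [show (-2:ℂ) * s = 2 * (-s) by ring]
  ring

lemma expK_f2 {U : Set ℂ} {R : ℝ} (hU : ∀ s ∈ U, ‖s‖ ≤ R) {B δ : ℝ} (hB : 0 < B) (hδ : 0 < δ) :
    ExpK U (fun k s => (k : ℂ) ^ 2 * ((cr B δ k : ℂ) * (cL δ k : ℂ) ^ (-s))) := by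
  have h1 := (PolyK.term (fun s => ((B : ℂ) ^ (-1:ℂ))) (2 * δ) (-(2 * δ)) (Coef.const U _) (by linarith)
    (by linarith)).expK
  have h2 := expK_one_add hU (x := 1 / (4 * B)) (γ := 2)
    (by have : 0 < 1 / (4 * B) := by positivity
        linarith) (by norm_num) (w := fun s => -1) (by fun_prop)
  have h3 := expK_one_add hU (x := -1/4) (γ := 2 * δ) le_rfl (by linarith) (w := fun s => 1 - s)
    (by fun_prop)
  refine ((h1.mul hU h2).mul hU h3).congr ?_
  intro k hk s hs
  have hk' : (k:ℂ) ≠ 0 := by exact_mod_cast (by omega : k ≠ 0)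
  have hL := cL_pos hδ hk
  have hL' : (cL δ k : ℂ) ≠ 0 := by exact_mod_cast hL.ne'
  have e : (cr B δ k : ℂ) * (cL δ k : ℂ) ^ (-s) = (cL δ k : ℂ) ^ (1 - s) * (cC B k : ℂ) ^ (-1:ℂ) := by
    rw [sub_eq_add_neg, Complex.cpow_add _ _ hL', Complex.cpow_one, Complex.cpow_neg_one, cr]
    push_cast
    ring
  rw [e, cL_cpow hδ hk, cC_cpow hB hk]
  have e2 : (k:ℂ) ^ (2 * -1 : ℂ) = ((k:ℂ) ^ 2)⁻¹ := by
    rw [show (2 * -1 : ℂ) = -((2:ℕ):ℂ) by norm_num, Complex.cpow_neg, Complex.cpow_natCast]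
  have e3 : ((2 * δ : ℝ) : ℂ) + ((-(2 * δ) : ℝ) : ℂ) * s = 2 * δ * (1 - s) := by push_cast; ring
  rw [e2, e3]
  field_simp

lemma expK_cr {U : Set ℂ} {R : ℝ} (hU : ∀ s ∈ U, ‖s‖ ≤ R) {B δ : ℝ} (hB : 0 < B) (hδ : 0 < δ)
    (hδ1 : δ < 1) : ExpK U (fun k _ => (cr B δ k : ℂ)) := by
  have h1 := (PolyK.term (fun s => ((B : ℂ) ^ (-1:ℂ))) (2 * δ - 2) 0 (Coef.const U _) (by linarith)
    (by linarith)).expK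
  have h2 := expK_one_add hU (x := 1 / (4 * B)) (γ := 2)
    (by have : 0 < 1 / (4 * B) := by positivity
        linarith) (by norm_num) (w := fun s => -1) (by fun_prop)
  have h3 := expK_one_add hU (x := -1/4) (γ := 2 * δ) le_rfl (by linarith) (w := fun s => 1)
    (by fun_prop)
  refine ((h1.mul hU h2).mul hU h3).congr ?_
  intro k hk s hs
  have hk' : (k:ℂ) ≠ 0 := by exact_mod_cast (by omega : k ≠ 0)
  have e : (cr B δ k : ℂ) = (cL δ k : ℂ) ^ (1 : ℂ) * (cC B k : ℂ) ^ (-1:ℂ) := by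
    rw [Complex.cpow_one, Complex.cpow_neg_one, cr]
    push_cast
    ring
  rw [e, cL_cpow hδ hk, cC_cpow hB hk]
  have e3 : ((2 * δ - 2 : ℝ) : ℂ) + ((0 : ℝ) : ℂ) * s = 2 * δ * 1 + 2 * (-1) := by push_cast; ring
  rw [e3, Complex.cpow_add _ _ hk']
  ring

lemma cr_le {B δ : ℝ} (hB : 0 < B) (hδ : 0 < δ) {k : ℕ} (hk : 1 ≤ k) :
    cr B δ k ≤ 1 / B * (k : ℝ) ^ (-(2 - 2 * δ)) := by
  have hk0 : (0:ℝ) < k := by exact_mod_cast hk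
  have h2 : (0:ℝ) < (k:ℝ) ^ (2:ℝ) := by positivity
  have e : (1:ℝ) / B * (k : ℝ) ^ (-(2 - 2 * δ)) = (k : ℝ) ^ (2 * δ) / (B * (k:ℝ) ^ 2) := by
    rw [show -(2 - 2 * δ) = 2 * δ - (2:ℕ) by push_cast; ring, Real.rpow_sub hk0, Real.rpow_natCast]
    field_simp
  rw [e, cr]
  apply div_le_div₀ (by positivity) (by unfold cL; linarith) (by positivity) (by unfold cC; linarith)

lemma hlow_taylor {r : ℝ} (hr : 0 < r) (N : ℕ) : ∀ {s : ℂ}, s.re < 2 →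
    hlow r s = ∑ n ∈ Finset.range N, (-1) ^ n / (n + 2 - s) * (r : ℂ) ^ n +
      (-1) ^ N * (r : ℂ) ^ N * hlow r (s - N) := by
  induction N with
  | zero => intro s hs; simp
  | succ N ih =>
    intro s hs
    rw [ih hs, Finset.sum_range_succ, hlow_rec hr (s := s - N)
      (by simp; have : (0:ℝ) ≤ N := Nat.cast_nonneg N
          linarith)]
    rw [show (2 : ℂ) - (s - N) = N + 2 - s by ring, show s - (N:ℂ) - 1 = s - ((N + 1 : ℕ) : ℂ) by push_cast; ring]
    ring

lemma expK_hlow {U : Set ℂ} {R : ℝ} (hU : ∀ s ∈ U, ‖s‖ ≤ R) (hU2 : ∀ s ∈ U, s.re < 3 / 2)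
    {B δ : ℝ} (hB : 0 < B) (hδ : 0 < δ)
    (hδ1 : δ < 1) : ExpK U (fun k s => hlow (cr B δ k) s) := by
  refine ExpK.comp hU (expK_cr hU hB hδ hδ1) (γ := 2 - 2 * δ) (by linarith) (Kr := 1 / B) ?_ ?_
  · intro k hk
    rw [abs_of_pos (cr_pos hB hδ hk)]
    exact cr_le hB hδ hk
  · intro N
    have hre : ∀ n : ℕ, ∀ s ∈ U, 1 / 2 ≤ ((n:ℂ) + 2 - s).re := by
      intro n s hs
      have := hU2 s hs
      have h0 : (0:ℝ) ≤ n := Nat.cast_nonneg n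
      simp
      linarith
    have hne : ∀ n : ℕ, ∀ s ∈ U, (n:ℂ) + 2 - s ≠ 0 := by
      intro n s hs h
      have := hre n s hs
      rw [h] at this
      norm_num at this
    refine ⟨fun n s => (-1) ^ n / (n + 2 - s), fun n => ⟨?_, 2, ?_⟩, 2, by norm_num, ?_⟩
    · intro s hs
      have := hne n s hs
      exact (by fun_prop (disch := assumption) : DifferentiableAt ℂ (fun s : ℂ => (-1) ^ n / (n + 2 - s)) s).differentiableWithinAt
    · intro s hs
      rw [norm_div, norm_pow, norm_neg, norm_one, one_pow, div_le_iff₀ (norm_pos_iff.2 (hne n s hs))]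
      have := (hre n s hs).trans (Complex.re_le_norm _)
      linarith
    · intro k hk s hs
      have hr := cr_pos hB hδ hk
      rw [hlow_taylor hr N (by linarith [hU2 s hs]), add_sub_cancel_left, norm_mul, norm_mul, norm_pow, norm_pow,
        norm_neg, norm_one, one_pow, one_mul, Complex.norm_real, Real.norm_eq_abs, mul_comm]
      have h0 : (0:ℝ) ≤ N := Nat.cast_nonneg N
      have hh := hU2 s hs
      refine mul_le_mul_of_nonneg_right ((hlow_bound hr (by simp; linarith)).trans ?_) (by positivity)
      rw [div_le_iff₀ (by simp; linarith)]
      simp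
      linarith

lemma cL_cpow_diff {δ : ℝ} (hδ : 0 < δ) {k : ℕ} (hk : 1 ≤ k) :
    Differentiable ℂ (fun s : ℂ => (cL δ k : ℂ) ^ (-s)) := by
  have hL := cL_pos hδ hk
  have hL' : (cL δ k : ℂ) ≠ 0 := by exact_mod_cast hL.ne'
  exact fun s => (differentiableAt_id.neg).const_cpow (Or.inl hL')

lemma cC_cpow_diff {B : ℝ} (hB : 0 < B) (k : ℕ) :
    Differentiable ℂ (fun s : ℂ => (cC B k : ℂ) ^ (-s)) := by
  have hL := cC_pos hB k
  have hL' : (cC B k : ℂ) ≠ 0 := by exact_mod_cast hL.ne'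
  exact fun s => (differentiableAt_id.neg).const_cpow (Or.inl hL')

lemma sin_mero (z : ℂ) : MeromorphicAt (fun s : ℂ => Complex.sin (Real.pi * s) / (2 * Real.pi)) z := by
  have h : Differentiable ℂ (fun s : ℂ => Complex.sin (Real.pi * s) / (2 * Real.pi)) := by fun_prop
  exact (h.analyticAt z).meromorphicAt

lemma region {a δ : ℝ} (ha : 0 < a) (hδ : 0 < δ) (hδ1 : δ < 1) {U : Set ℂ} (hUo : IsOpen U)
    {R : ℝ} (hU : ∀ s ∈ U, ‖s‖ ≤ R) (hU2 : ∀ s ∈ U, s.re < 3 / 2) :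
    ∃ G : ℂ → ℂ, MeromorphicOn G U ∧ ∀ s ∈ U, 1 < s.re →
      HasSum (fun k : ℕ => cuspE0 a δ (k + 1) s) (G s) := by
  obtain ⟨B, hBdef⟩ : ∃ B, B = (2 * Real.pi * a) ^ 2 := ⟨_, rfl⟩
  have hB : 0 < B := by have := Real.pi_pos; rw [hBdef]; positivity
  obtain ⟨G1, m1, s1⟩ := ExpK.continuation hUo (expK_f1 hU hB) (fun k hk =>
    ((cC_cpow_diff hB k).const_mul _).differentiableOn)
  have d2 : ∀ k : ℕ, k ≥ 1 → DifferentiableOn ℂ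
      (fun s => (k : ℂ) ^ 2 * ((cr B δ k : ℂ) * (cL δ k : ℂ) ^ (-s))) U := fun k hk =>
    (((cL_cpow_diff hδ hk).const_mul _).const_mul _).differentiableOn
  obtain ⟨G2, m2, s2⟩ := ExpK.continuation hUo (expK_f2 hU hB hδ) d2
  obtain ⟨G3, m3, s3⟩ := ExpK.continuation hUo
    (((expK_f2 hU hB hδ).mul hU (expK_cr hU hB hδ hδ1)).mul hU (expK_hlow hU hU2 hB hδ hδ1))
    (fun k hk => ((d2 k hk).mul (differentiableOn_const _)).mul (fun s hs =>
      (hlow_differentiableAt (cr_pos hB hδ hk) (by linarith [hU2 s hs])).differentiableWithinAt))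
  refine ⟨fun s => -(1 / 2) * G1 s - (Complex.sin (Real.pi * s) / (2 * Real.pi)) *
    ((s - 1)⁻¹ * G2 s + G3 s), ?_, ?_⟩
  · intro z hz
    have e1 : MeromorphicAt (fun s : ℂ => (s - 1)⁻¹) z := by fun_prop
    exact ((MeromorphicAt.const _ z).mul (m1 z hz)).sub
      ((sin_mero z).mul ((e1.mul (m2 z hz)).add (m3 z hz)))
  · intro s hs h1
    have h2 : s.re < 2 := by linarith [hU2 s hs]
    have H := ((s1 s hs h1).mul_left (-(1/2))).sub
      ((((s2 s hs h1).mul_left ((s - 1)⁻¹)).add (s3 s hs h1)).mul_left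
        (Complex.sin (Real.pi * s) / (2 * Real.pi)))
    refine H.congr_fun ?_
    intro k
    have hk : 1 ≤ k + 1 := by omega
    have hk' : ((k + 1 : ℕ) : ℂ) ≠ 0 := by exact_mod_cast (by omega : k + 1 ≠ 0)
    rw [cuspE0_formula ha hδ hk h1 h2, ← hBdef]
    field_simp

lemma summable_uu : Summable (fun k : ℕ => (((k + 1 : ℕ) : ℝ) ^ (-(3 / 2) : ℝ))) :=
  (summable_nat_add_iff 1).2 (Real.summable_nat_rpow.2 (by norm_num))

lemma sum_lemma {U : Set ℂ} (hUo : IsOpen U) {t : ℕ → ℂ → ℂ} {K : ℝ}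
    (hd : ∀ k ≥ 1, DifferentiableOn ℂ (t k) U)
    (hb : ∀ k ≥ 1, ∀ s ∈ U, ‖t k s‖ ≤ K * (k : ℝ) ^ (-(3 / 2) : ℝ)) :
    ∃ Q : ℂ → ℂ, DifferentiableOn ℂ Q U ∧ (∀ s ∈ U, HasSum (fun k : ℕ => t (k + 1) s) (Q s)) ∧
      ∀ s ∈ U, ‖Q s‖ ≤ K * ∑' k : ℕ, (((k + 1 : ℕ) : ℝ) ^ (-(3 / 2) : ℝ)) := by
  have hs := summable_uu.mul_left K
  have hsum : ∀ s ∈ U, HasSum (fun k : ℕ => t (k + 1) s) (∑' k : ℕ, t (k + 1) s) := fun s hs' =>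
    (Summable.of_norm_bounded hs (fun k => hb (k + 1) (by omega) s hs')).hasSum
  refine ⟨fun s => ∑' k : ℕ, t (k + 1) s, ?_, hsum, ?_⟩
  · exact Complex.differentiableOn_tsum_of_summable_norm hs (fun k => hd (k + 1) (by omega)) hUo
      (fun k s hs' => hb (k + 1) (by omega) s hs')
  · intro s hs'
    rw [← tsum_mul_left]
    exact tsum_of_norm_bounded hs.hasSum (fun k => hb (k + 1) (by omega) s hs')

def U1 : Set ℂ := {s : ℂ | -(1 / 4) < s.re ∧ s.re < 3 / 2 ∧ ‖s‖ < 4}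

lemma U1_open : IsOpen U1 :=
  (isOpen_lt continuous_const Complex.continuous_re).inter
    ((isOpen_lt Complex.continuous_re continuous_const).inter
      (isOpen_lt continuous_norm continuous_const))

lemma SD_bound (X : ℝ) (hX : 0 ≤ X) : ∃ K : ℝ, 0 ≤ K ∧ ∀ e : ℝ, 0 ≤ e → e ≤ X → ∀ k : ℕ, k ≥ 1 → ∀ s ∈ U1,
    ‖(k : ℂ) ^ (2 * (-s)) * (((1 + e * (k : ℝ) ^ (-2 : ℝ) : ℝ) : ℂ) ^ (-s) - 1)‖ ≤
      K * e * (k : ℝ) ^ (-(3 / 2) : ℝ) := by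
  obtain ⟨K, hK, hb⟩ := one_add_cpow_taylor hX 1 4
  refine ⟨K, hK, fun e he heX k hk s hs => ?_⟩
  obtain ⟨h1, h2, h3⟩ := hs
  have hk1 : (1:ℝ) ≤ k := by exact_mod_cast hk
  have hk0 : (0:ℝ) < k := by linarith
  have hp : (k : ℝ) ^ (-2:ℝ) ≤ 1 := Real.rpow_le_one_of_one_le_of_nonpos hk1 (by norm_num)
  have hp0 : 0 ≤ (k : ℝ) ^ (-2:ℝ) := by positivity
  have hx0 := mul_nonneg he hp0
  have h := hb (-s) (by rw [norm_neg]; exact h3.le) (e * (k : ℝ) ^ (-2:ℝ)) (by linarith)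
    (by nlinarith)
  simp only [Finset.range_one, Finset.sum_singleton, pow_zero, mul_one, pow_one, bcoef,
    abs_of_nonneg hx0] at h
  rw [norm_mul, Complex.norm_natCast_cpow_of_pos (by omega)]
  have h4 : (k:ℝ) ^ (2 * (-s)).re ≤ (k:ℝ) ^ (1 / 2 : ℝ) := by
    apply Real.rpow_le_rpow_of_exponent_le hk1
    simp
    linarith
  refine (mul_le_mul h4 h (norm_nonneg _) (by positivity)).trans (le_of_eq ?_)
  rw [show (-(3 / 2) : ℝ) = 1 / 2 + (-2) by norm_num, Real.rpow_add hk0]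
  ring

lemma cL_pow_bound {δ : ℝ} (hδ : 0 < δ) (hδ1 : δ < 1 / 8) {k : ℕ} (hk : 1 ≤ k) {s : ℂ} (hs : s ∈ U1) :
    ‖(cL δ k : ℂ) ^ (-s)‖ ≤ 3 * (k : ℝ) ^ (1 / 4 : ℝ) := by
  obtain ⟨h1, h2, h3⟩ := hs
  have hk1 : (1:ℝ) ≤ k := by exact_mod_cast hk
  have hL := cL_ge hδ hk
  have hL0 := cL_pos hδ hk
  rw [Complex.norm_cpow_eq_rpow_re_of_pos hL0]
  have e : cL δ k = (4 / 3 * cL δ k) * (3 / 4) := by ring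
  rw [e, Real.mul_rpow (by positivity) (by norm_num)]
  have b1 : (4 / 3 * cL δ k) ^ (-s).re ≤ 4 / 3 * (k : ℝ) ^ (1 / 4 : ℝ) := by
    calc (4 / 3 * cL δ k) ^ (-s).re ≤ (4 / 3 * cL δ k) ^ (1:ℝ) := by
          apply Real.rpow_le_rpow_of_exponent_le (by linarith)
          simp; linarith
      _ = 4 / 3 * cL δ k := Real.rpow_one _
      _ ≤ _ := by
          have : (k:ℝ) ^ (2 * δ) ≤ (k : ℝ) ^ (1 / 4 : ℝ) :=
            Real.rpow_le_rpow_of_exponent_le hk1 (by linarith)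
          unfold cL
          linarith
  have b2 : (3 / 4 : ℝ) ^ (-s).re ≤ 16 / 9 := by
    calc (3 / 4 : ℝ) ^ (-s).re ≤ (3 / 4 : ℝ) ^ (-(2:ℕ) : ℝ) := by
          apply Real.rpow_le_rpow_of_exponent_ge (by norm_num) (by norm_num)
          simp; linarith
      _ = 16 / 9 := by
          rw [Real.rpow_neg (by norm_num), Real.rpow_natCast]; norm_num
  have h0 : (0:ℝ) ≤ (k : ℝ) ^ (1 / 4 : ℝ) := by positivity
  calc _ ≤ (4 / 3 * (k : ℝ) ^ (1 / 4 : ℝ)) * (16 / 9) :=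
        mul_le_mul b1 b2 (by positivity) (by positivity)
    _ ≤ _ := by linarith

lemma Q2_bound {B δ : ℝ} (hB : 0 < B) (hδ : 0 < δ) (hδ1 : δ < 1 / 8) {k : ℕ} (hk : 1 ≤ k) {s : ℂ}
    (hs : s ∈ U1) :
    ‖(cr B δ k : ℂ) * (cL δ k : ℂ) ^ (-s)‖ ≤ 3 / B * (k : ℝ) ^ (-(3 / 2) : ℝ) := by
  have hk1 : (1:ℝ) ≤ k := by exact_mod_cast hk
  have hk0 : (0:ℝ) < k := by linarith
  have hr := cr_pos hB hδ hk
  rw [norm_mul, Complex.norm_real, Real.norm_of_nonneg hr.le]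
  have h1 : cr B δ k ≤ 1 / B * (k : ℝ) ^ (-(7 / 4) : ℝ) :=
    (cr_le hB hδ hk).trans (mul_le_mul_of_nonneg_left
      (Real.rpow_le_rpow_of_exponent_le hk1 (by linarith)) (by positivity))
  refine (mul_le_mul h1 (cL_pow_bound hδ hδ1 hk hs) (norm_nonneg _) (by positivity)).trans (le_of_eq ?_)
  rw [show (-(3 / 2) : ℝ) = -(7 / 4) + 1 / 4 by norm_num, Real.rpow_add hk0]
  ring

lemma Q3_bound {B δ : ℝ} (hB : 0 < B) (hδ : 0 < δ) (hδ1 : δ < 1 / 8) {k : ℕ} (hk : 1 ≤ k) {s : ℂ}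
    (hs : s ∈ U1) :
    ‖(cr B δ k : ℂ) * (cL δ k : ℂ) ^ (-s) * (cr B δ k * hlow (cr B δ k) s)‖ ≤
      6 / B ^ 2 * (k : ℝ) ^ (-(3 / 2) : ℝ) := by
  have hk1 : (1:ℝ) ≤ k := by exact_mod_cast hk
  have hr := cr_pos hB hδ hk
  have h1 : cr B δ k ≤ 1 / B := by
    refine (cr_le hB hδ hk).trans (mul_le_of_le_one_right (by positivity)
      (Real.rpow_le_one_of_one_le_of_nonpos hk1 (by linarith)))
  have h2 : ‖hlow (cr B δ k) s‖ ≤ 2 := by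
    have := hs.2.1
    refine (hlow_bound hr (by linarith)).trans ?_
    rw [div_le_iff₀ (by linarith)]
    linarith
  rw [norm_mul]
  have h3 : ‖(cr B δ k : ℂ) * hlow (cr B δ k) s‖ ≤ 1 / B * 2 := by
    rw [norm_mul, Complex.norm_real, Real.norm_of_nonneg hr.le]
    exact mul_le_mul h1 h2 (norm_nonneg _) (by positivity)
  refine (mul_le_mul (Q2_bound hB hδ hδ1 hk hs) h3 (norm_nonneg _) (by positivity)).trans (le_of_eq ?_)
  field_simp
  norm_num


lemma near_zero {δ : ℝ} (hδ : 0 < δ) (hδ1 : δ < 1 / 8) : ∃ M : ℝ, ∀ a : ℝ, 0 < a →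
    ∃ G : ℂ → ℂ, MeromorphicOn G U1 ∧ AnalyticAt ℂ G 0 ∧
      (∀ s ∈ U1, 1 < s.re → HasSum (fun k : ℕ => cuspE0 a δ (k + 1) s) (G s)) ∧
      (1 ≤ a → ‖deriv G 0 - riemannZeta 0 * (Real.log a : ℂ)‖ ≤ M / a ^ 2) := by
  obtain ⟨K1, hK1, hb1⟩ := SD_bound 1 zero_le_one
  obtain ⟨S, hS⟩ : ∃ S, S = ∑' k : ℕ, (((k + 1 : ℕ) : ℝ) ^ (-(3 / 2) : ℝ)) := ⟨_, rfl⟩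
  have hS0 : 0 ≤ S := by rw [hS]; exact tsum_nonneg (fun k => by positivity)
  refine ⟨K1 * S + 9 / 2 * S, fun a ha => ?_⟩
  obtain ⟨B, hBdef⟩ : ∃ B, B = (2 * Real.pi * a) ^ 2 := ⟨_, rfl⟩
  have hB : 0 < B := by have := Real.pi_pos; rw [hBdef]; positivity
  have hB' : (B:ℂ) ≠ 0 := by exact_mod_cast hB.ne'
  have hBa : a ^ 2 ≤ B := by
    rw [hBdef, mul_pow]
    have : (1:ℝ) ≤ (2 * Real.pi) ^ 2 := by nlinarith [Real.pi_gt_three]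
    nlinarith [sq_nonneg a]
  have he : 0 < 1 / (4 * B) := by positivity
  have he1 : 1 ≤ a → 1 / (4 * B) ≤ 1 := by
    intro h
    rw [div_le_one (by positivity)]
    nlinarith
  obtain ⟨K, hK, hb, hKK⟩ : ∃ K : ℝ, 0 ≤ K ∧ (∀ k : ℕ, k ≥ 1 → ∀ s ∈ U1,
      ‖(k : ℂ) ^ (2 * (-s)) * (((1 + 1 / (4 * B) * (k : ℝ) ^ (-2 : ℝ) : ℝ) : ℂ) ^ (-s) - 1)‖ ≤
      K * (1 / (4 * B)) * (k : ℝ) ^ (-(3 / 2) : ℝ)) ∧ (1 ≤ a → K = K1) := by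
    by_cases h : 1 ≤ a
    · exact ⟨K1, hK1, fun k hk s hs => hb1 _ he.le (he1 h) k hk s hs, fun _ => rfl⟩
    · obtain ⟨K, hK, hb⟩ := SD_bound _ he.le
      exact ⟨K, hK, fun k hk s hs => hb _ he.le le_rfl k hk s hs, fun h' => absurd h' h⟩
  have hkne : ∀ k : ℕ, k ≥ 1 → (k:ℂ) ≠ 0 := fun k hk => by exact_mod_cast (by omega : k ≠ 0)
  obtain ⟨SD, dSD, sSD, bSD⟩ := sum_lemma U1_open (t := fun k s => (k : ℂ) ^ (2 * (-s)) *
    (((1 + 1 / (4 * B) * (k : ℝ) ^ (-2 : ℝ) : ℝ) : ℂ) ^ (-s) - 1)) (by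
      intro k hk
      have hk0 := hkne k hk
      have hx : ((1 + 1 / (4 * B) * (k : ℝ) ^ (-2 : ℝ) : ℝ) : ℂ) ≠ 0 := by
        have : 0 < 1 + 1 / (4 * B) * (k : ℝ) ^ (-2 : ℝ) := by positivity
        exact_mod_cast this.ne'
      have d1 : Differentiable ℂ (fun s : ℂ => (k : ℂ) ^ (2 * (-s))) := fun s =>
        (by fun_prop : DifferentiableAt ℂ (fun s : ℂ => 2 * (-s)) s).const_cpow (Or.inl hk0)
      have d2 : Differentiable ℂ (fun s : ℂ => ((1 + 1 / (4 * B) * (k : ℝ) ^ (-2 : ℝ) : ℝ) : ℂ) ^ (-s)) :=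
        fun s => (differentiableAt_id.neg).const_cpow (Or.inl hx)
      exact (d1.mul (d2.sub_const 1)).differentiableOn) hb
  obtain ⟨Q2, dQ2, sQ2, bQ2⟩ := sum_lemma U1_open
    (t := fun k s => (cr B δ k : ℂ) * (cL δ k : ℂ) ^ (-s))
    (fun k hk => ((cL_cpow_diff hδ hk).const_mul _).differentiableOn)
    (fun k hk s hs => Q2_bound hB hδ hδ1 hk hs)
  obtain ⟨Q3, dQ3, sQ3, bQ3⟩ := sum_lemma U1_open
    (t := fun k s => (cr B δ k : ℂ) * (cL δ k : ℂ) ^ (-s) * (cr B δ k * hlow (cr B δ k) s))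
    (fun k hk => ((cL_cpow_diff hδ hk).const_mul _).differentiableOn.mul (fun s hs =>
      ((hlow_differentiableAt (cr_pos hB hδ hk) (by linarith [hs.2.1])).const_mul _).differentiableWithinAt))
    (fun k hk s hs => Q3_bound hB hδ hδ1 hk hs)
  rw [← hS] at bSD bQ2 bQ3
  have h0U : (0:ℂ) ∈ U1 := by simp [U1]
  have anSD : ∀ s ∈ U1, AnalyticAt ℂ SD s := fun s hs => dSD.analyticAt (U1_open.mem_nhds hs)
  have anQ2 : ∀ s ∈ U1, AnalyticAt ℂ Q2 s := fun s hs => dQ2.analyticAt (U1_open.mem_nhds hs)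
  have anQ3 : ∀ s ∈ U1, AnalyticAt ℂ Q3 s := fun s hs => dQ3.analyticAt (U1_open.mem_nhds hs)
  have dB : Differentiable ℂ (fun s : ℂ => (B : ℂ) ^ (-s)) := fun s =>
    (differentiableAt_id.neg).const_cpow (Or.inl hB')
  have dsin : Differentiable ℂ (fun s : ℂ => Complex.sin (Real.pi * s) / (2 * Real.pi)) := by fun_prop
  refine ⟨fun s => -(1 / 2) * ((B : ℂ) ^ (-s) * (riemannZeta (2 * s) + SD s)) -
    (Complex.sin (Real.pi * s) / (2 * Real.pi)) * ((s - 1)⁻¹ * Q2 s + Q3 s), ?_, ?_, ?_, ?_⟩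
  · intro z hz
    have e1 : MeromorphicAt (fun s : ℂ => (s - 1)⁻¹) z := by fun_prop
    have e2 : MeromorphicAt (fun s : ℂ => riemannZeta (2 * s)) z :=
      (zeta_mero (2 * z)).comp_analyticAt (g := fun s : ℂ => 2 * s) (by fun_prop)
    exact ((MeromorphicAt.const _ z).mul ((dB.analyticAt z).meromorphicAt.mul
      (e2.add (anSD z hz).meromorphicAt))).sub
      ((sin_mero z).mul ((e1.mul (anQ2 z hz).meromorphicAt).add (anQ3 z hz).meromorphicAt))
  · have e1 : AnalyticAt ℂ (fun s : ℂ => (s - 1)⁻¹) 0 :=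
      (by fun_prop : AnalyticAt ℂ (fun s : ℂ => s - 1) 0).inv (by norm_num)
    have e2 : AnalyticAt ℂ (fun s : ℂ => riemannZeta (2 * s)) 0 := by
      have : DifferentiableOn ℂ (fun s : ℂ => riemannZeta (2 * s)) (Metric.ball 0 (1/2)) := by
        intro s hs
        have hne : 2 * s ≠ 1 := by
          intro h
          have h2 : ‖2 * s‖ = 1 := by rw [h]; simp
          rw [mem_ball_zero_iff] at hs
          rw [norm_mul] at h2
          norm_num at h2
          linarith
        exact ((differentiableAt_riemannZeta hne).comp s (by fun_prop)).differentiableWithinAt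
      exact this.analyticAt (Metric.ball_mem_nhds _ (by norm_num))
    exact ((analyticAt_const).mul ((dB.analyticAt 0).mul
      (e2.add (anSD 0 h0U)))).sub
      ((dsin.analyticAt 0).mul ((e1.mul (anQ2 0 h0U)).add (anQ3 0 h0U)))
  · intro s hs h1
    have h2 : s.re < 2 := by linarith [hs.2.1]
    have hre : 1 < (2 * s).re := by simp; linarith
    have hsum : Summable (fun n : ℕ => 1 / ((n : ℂ) + 1) ^ (2 * s)) := by
      have := (summable_nat_add_iff 1).2 (Complex.summable_one_div_nat_cpow.2 hre)
      simpa using this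
    have hz := hsum.hasSum
    rw [← zeta_eq_tsum_one_div_nat_add_one_cpow hre] at hz
    have H := (((hz.add (sSD s hs)).mul_left ((B:ℂ) ^ (-s))).mul_left (-(1/2))).sub
      ((((sQ2 s hs).mul_left ((s - 1)⁻¹)).add (sQ3 s hs)).mul_left
        (Complex.sin (Real.pi * s) / (2 * Real.pi)))
    refine H.congr_fun ?_
    intro k
    have hk : 1 ≤ k + 1 := by omega
    rw [cuspE0_formula ha hδ hk h1 h2, ← hBdef, cC_cpow hB hk]
    have e : 1 / ((k:ℂ) + 1) ^ (2 * s) = ((k + 1 : ℕ) : ℂ) ^ (2 * (-s)) := by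
      rw [mul_neg, Complex.cpow_neg]; push_cast; simp
    rw [e]
    ring
  · intro ha1
    have hSD0 : SD 0 = 0 := by
      refine (sSD 0 h0U).unique ?_
      simpa using (hasSum_zero : HasSum (fun _ : ℕ => (0:ℂ)) 0)
    have D1 : HasDerivAt (fun s : ℂ => (B : ℂ) ^ (-s)) (-(Real.log B : ℂ)) 0 := by
      have := (hasDerivAt_id (0:ℂ)).neg.const_cpow (c := (B:ℂ)) (Or.inl hB')
      simpa [Complex.ofReal_log hB.le] using this
    have D2 : HasDerivAt (fun s : ℂ => riemannZeta (2 * s)) (deriv riemannZeta 0 * 2) 0 := by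
      have h : HasDerivAt riemannZeta (deriv riemannZeta 0) (2 * 0) := by
        rw [mul_zero]; exact (differentiableAt_riemannZeta (by norm_num)).hasDerivAt
      have h2 : HasDerivAt (fun s : ℂ => 2 * s) 2 0 := by
        simpa using (hasDerivAt_id (0:ℂ)).const_mul 2
      exact h.comp 0 h2
    have D3 := (anSD 0 h0U).differentiableAt.hasDerivAt
    have D4 : HasDerivAt (fun s : ℂ => Complex.sin (Real.pi * s) / (2 * Real.pi)) (1 / 2) 0 := by
      have h2 : HasDerivAt (fun s : ℂ => (Real.pi : ℂ) * s) Real.pi 0 := by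
        simpa using (hasDerivAt_id (0:ℂ)).const_mul (Real.pi : ℂ)
      have h3 := (h2.csin).div_const (2 * (Real.pi:ℂ))
      have hpi : (Real.pi : ℂ) ≠ 0 := by exact_mod_cast Real.pi_ne_zero
      convert! h3 using 1
      simp
      field_simp
    have D5 : DifferentiableAt ℂ (fun s : ℂ => (s - 1)⁻¹ * Q2 s + Q3 s) 0 := by
      have e1 : DifferentiableAt ℂ (fun s : ℂ => (s - 1)⁻¹) 0 :=
        (by fun_prop : DifferentiableAt ℂ (fun s : ℂ => s - 1) 0).inv (by norm_num)
      exact (e1.mul (anQ2 0 h0U).differentiableAt).add (anQ3 0 h0U).differentiableAt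
    have D := ((D1.mul (D2.add D3)).const_mul (-(1/2))).sub (D4.mul D5.hasDerivAt)
    have hval : deriv (fun s => -(1 / 2) * ((B : ℂ) ^ (-s) * (riemannZeta (2 * s) + SD s)) -
        (Complex.sin (Real.pi * s) / (2 * Real.pi)) * ((s - 1)⁻¹ * Q2 s + Q3 s)) 0
        - riemannZeta 0 * (Real.log a : ℂ) = -(1 / 2) * deriv SD 0 + 1 / 2 * Q2 0 - 1 / 2 * Q3 0 := by
      have hlog : Real.log B = 2 * Real.log (2 * Real.pi) + 2 * Real.log a := by
        rw [hBdef, Real.log_pow, Real.log_mul (by positivity) ha.ne']; push_cast; ring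
      have h2pi : Complex.log (2 * (Real.pi:ℂ)) = ((Real.log (2 * Real.pi) : ℝ) : ℂ) := by
        rw [Complex.ofReal_log (by positivity)]; push_cast; rfl
      have := D.deriv
      refine (congrArg (· - riemannZeta 0 * (Real.log a : ℂ)) this).trans ?_
      simp only [mul_zero, neg_zero, Complex.cpow_zero, Complex.sin_zero, zero_div, Pi.add_apply, hSD0,
        deriv_riemannZeta_zero, riemannZeta_zero, hlog]
      rw [h2pi]
      push_cast
      ring
    rw [hval]
    have hcb : Metric.closedBall (0:ℂ) (1 / 8) ⊆ U1 := by
      intro s hs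
      rw [mem_closedBall_zero_iff] at hs
      have h1 := (abs_le.1 ((Complex.abs_re_le_norm s).trans hs))
      exact ⟨by linarith [h1.1], by linarith [h1.2], by linarith⟩
    have b1 : ‖deriv SD 0‖ ≤ (K * (1 / (4 * B)) * S) / (1 / 8) := by
      apply Complex.norm_deriv_le_of_forall_mem_sphere_norm_le (by norm_num)
      · exact (dSD.mono hcb).diffContOnCl_ball subset_rfl
      · intro z hz
        exact bSD z (hcb (Metric.sphere_subset_closedBall hz))
    have b2 := bQ2 0 h0U
    have b3 := bQ3 0 h0U
    rw [hKK ha1] at b1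
    have hB1 : 1 ≤ B := by nlinarith
    have hBB : 6 / B ^ 2 * S ≤ 6 / B * S := by
      apply mul_le_mul_of_nonneg_right _ hS0
      apply div_le_div_of_nonneg_left (by norm_num) hB
      nlinarith
    have hfin : ‖-(1 / 2) * deriv SD 0 + 1 / 2 * Q2 0 - 1 / 2 * Q3 0‖ ≤
        1 / 2 * ‖deriv SD 0‖ + 1 / 2 * ‖Q2 0‖ + 1 / 2 * ‖Q3 0‖ := by
      refine (norm_sub_le _ _).trans ?_
      have := norm_add_le (-(1 / 2) * deriv SD 0) (1 / 2 * Q2 0)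
      simp only [norm_mul, norm_neg, norm_div, norm_one, Complex.norm_ofNat] at this ⊢
      linarith
    have hend : (K1 * S + 9 / 2 * S) / B ≤ (K1 * S + 9 / 2 * S) / a ^ 2 :=
      div_le_div_of_nonneg_left (by positivity) (by positivity) hBa
    have e1 : (K1 * (1 / (4 * B)) * S) / (1 / 8) = 2 * (K1 * S / B) := by field_simp; ring
    have e2 : (K1 * S + 9 / 2 * S) / B = K1 * S / B + 9 / 2 * (S / B) := by ring
    have e3 : 3 / B * S = 3 * (S / B) := by ring
    have e4 : 6 / B * S = 6 * (S / B) := by ring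
    rw [e1] at b1
    rw [e3] at b2
    rw [e4] at hBB
    rw [e2] at hend
    linarith

noncomputable def WW (B : ℝ) (s : ℂ) : ℝ :=
  ‖Complex.sin (Real.pi * s) / (2 * Real.pi)‖ * ((3 / 4 : ℝ) ^ (1 - s.re) / (B * (s.re - 1)))

lemma WW_cont {B : ℝ} (hB : 0 < B) {s : ℂ} (hs : 1 < s.re) : ContinuousAt (WW B) s := by
  unfold WW
  apply ContinuousAt.mul
  · fun_prop
  · apply ContinuousAt.div
    · exact ContinuousAt.rpow (by fun_prop) (by fun_prop) (Or.inl (by norm_num))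
    · fun_prop
    · have : 0 < B * (s.re - 1) := mul_pos hB (by linarith)
      exact this.ne'

lemma cuspE0_bound {a δ : ℝ} (ha : 0 < a) (hδ : 0 < δ) {k : ℕ} (hk : 1 ≤ k) {s : ℂ} (hs : 1 < s.re) :
    ‖cuspE0 a δ k s‖ ≤ WW ((2 * Real.pi * a) ^ 2) s * ((k : ℝ) ^ 2)⁻¹ := by
  rw [cuspE0_eq ha hδ hk]
  obtain ⟨B, hBdef⟩ : ∃ B, B = (2 * Real.pi * a) ^ 2 := ⟨_, rfl⟩
  have hB : 0 < B := by have := Real.pi_pos; rw [hBdef]; positivity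
  rw [← hBdef]
  have hk0 : (0:ℝ) < k := by exact_mod_cast hk
  have hr := cr_pos hB hδ hk
  have hL := cL_pos hδ hk
  have hC := cC_pos hB k
  have hs1 : 0 < s.re - 1 := by linarith
  rw [norm_mul, norm_neg, norm_mul, norm_mul, WW, mul_assoc ‖Complex.sin _ / _‖]
  apply mul_le_mul_of_nonneg_left _ (norm_nonneg _)
  rw [Complex.norm_real, Real.norm_of_nonneg hr.le, Complex.norm_cpow_eq_rpow_re_of_pos hL]
  have e : cr B δ k * cL δ k ^ (-s).re = cL δ k ^ (1 - s.re) / cC B k := by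
    rw [Complex.neg_re, sub_eq_add_neg, Real.rpow_add hL, Real.rpow_one, cr]; ring
  rw [e]
  have h1 : cL δ k ^ (1 - s.re) / cC B k ≤ (3 / 4 : ℝ) ^ (1 - s.re) / (B * (k:ℝ) ^ 2) := by
    apply div_le_div₀ (by positivity) _ (by positivity) (by unfold cC; linarith)
    exact Real.rpow_le_rpow_of_nonpos (by norm_num) (cL_ge hδ hk) (by linarith)
  refine (mul_le_mul h1 (jup_bound hr hs) (norm_nonneg _) (by positivity)).trans (le_of_eq ?_)
  field_simp

lemma cuspE0_diff {a δ : ℝ} (ha : 0 < a) (hδ : 0 < δ) {k : ℕ} (hk : 1 ≤ k) :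
    DifferentiableOn ℂ (cuspE0 a δ k) {s : ℂ | 1 < s.re} := by
  have hB : 0 < (2 * Real.pi * a) ^ 2 := by have := Real.pi_pos; positivity
  have e : cuspE0 a δ k = fun s => -(Complex.sin (Real.pi * s) / (2 * Real.pi)) *
      ((cr ((2 * Real.pi * a) ^ 2) δ k : ℂ) * (cL δ k : ℂ) ^ (-s) *
        jup (cr ((2 * Real.pi * a) ^ 2) δ k) s) := funext (cuspE0_eq ha hδ hk)
  rw [e]
  intro s hs
  have hs' : 1 < s.re := hs
  have d1 : DifferentiableAt ℂ (fun s : ℂ => -(Complex.sin (Real.pi * s) / (2 * Real.pi))) s := by fun_prop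
  exact (d1.mul ((((cL_cpow_diff hδ hk) s).const_mul _).mul
    (jup_differentiableAt (cr_pos hB hδ hk) (by linarith)))).differentiableWithinAt

lemma right_nhd {a δ : ℝ} (ha : 0 < a) (hδ : 0 < δ) {s : ℂ} (hs : 1 < s.re) :
    ∃ N : Set ℂ, IsOpen N ∧ s ∈ N ∧ N ⊆ {s : ℂ | 1 < s.re} ∧ ∃ u : ℕ → ℝ, Summable u ∧
      ∀ (k : ℕ), ∀ z ∈ N, ‖cuspE0 a δ (k + 1) z‖ ≤ u k := by
  have hB : 0 < (2 * Real.pi * a) ^ 2 := by have := Real.pi_pos; positivity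
  have h1 : ∀ᶠ z in 𝓝 s, WW ((2 * Real.pi * a) ^ 2) z < WW ((2 * Real.pi * a) ^ 2) s + 1 :=
    (WW_cont hB hs).eventually_lt continuousAt_const (by simp)
  have h2 : ∀ᶠ z : ℂ in 𝓝 s, 1 < z.re :=
    continuousAt_const.eventually_lt Complex.continuous_re.continuousAt hs
  obtain ⟨N, hN, hNo, hsN⟩ := eventually_nhds_iff.1 (h1.and h2)
  refine ⟨N, hNo, hsN, fun z hz => (hN z hz).2, _, summable_inv_sq.mul_left (WW ((2 * Real.pi * a) ^ 2) s + 1), ?_⟩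
  intro k z hz
  exact (cuspE0_bound ha hδ (by omega) (hN z hz).2).trans
    (mul_le_mul_of_nonneg_right (hN z hz).1.le (by positivity))

lemma right_summable {a δ : ℝ} (ha : 0 < a) (hδ : 0 < δ) {s : ℂ} (hs : 1 < s.re) :
    Summable (fun k : ℕ => ‖cuspE0 a δ (k + 1) s‖) := by
  obtain ⟨N, hNo, hsN, hN, u, hu, hb⟩ := right_nhd ha hδ hs
  exact Summable.of_nonneg_of_le (fun k => norm_nonneg _) (fun k => hb k s hsN) hu

lemma right_unif {a δ : ℝ} (ha : 0 < a) (hδ : 0 < δ) :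
    TendstoLocallyUniformlyOn
          (fun (n : ℕ) (s : ℂ) => ∑ k ∈ Finset.range n, cuspE0 a δ (k + 1) s)
          (fun s : ℂ => ∑' k : ℕ, cuspE0 a δ (k + 1) s)
          atTop {s : ℂ | 1 < s.re} := by
  intro V hV s hs
  obtain ⟨N, hNo, hsN, hN, u, hu, hb⟩ := right_nhd ha hδ hs
  exact ⟨N, mem_nhdsWithin_of_mem_nhds (hNo.mem_nhds hsN), tendstoUniformlyOn_tsum_nat hu hb V hV⟩

lemma right_analytic {a δ : ℝ} (ha : 0 < a) (hδ : 0 < δ) {s : ℂ} (hs : 1 < s.re) :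
    AnalyticAt ℂ (fun s : ℂ => ∑' k : ℕ, cuspE0 a δ (k + 1) s) s := by
  obtain ⟨N, hNo, hsN, hN, u, hu, hb⟩ := right_nhd ha hδ hs
  exact (Complex.differentiableOn_tsum_of_summable_norm hu
    (fun k => (cuspE0_diff ha hδ (by omega)).mono hN) hNo hb).analyticAt (hNo.mem_nhds hsN)

def UU : ℕ → Set ℂ
  | 0 => {s : ℂ | 1 < s.re}
  | 1 => U1
  | (n + 2) => {s : ℂ | s.re < 3 / 2 ∧ ‖s‖ < n + 2}

lemma UU_open (n : ℕ) : IsOpen (UU n) := by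
  match n with
  | 0 => exact isOpen_lt continuous_const Complex.continuous_re
  | 1 => exact U1_open
  | (n + 2) => exact (isOpen_lt Complex.continuous_re continuous_const).inter
                   (isOpen_lt continuous_norm continuous_const)

lemma convex_norm (r : ℝ) : Convex ℝ {s : ℂ | ‖s‖ < r} := by
  have : {s : ℂ | ‖s‖ < r} = Metric.ball 0 r := by ext; simp
  rw [this]; exact convex_ball _ _

lemma UU_convex (n : ℕ) : Convex ℝ (UU n) := by
  match n with
  | 0 => exact convex_halfSpace_re_gt 1
  | 1 => exact (convex_halfSpace_re_gt _).inter ((convex_halfSpace_re_lt _).inter (convex_norm _))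
  | (n + 2) => exact (convex_halfSpace_re_lt _).inter (convex_norm _)

lemma V_sub (n : ℕ) : Metric.ball (5 / 4 : ℂ) (1 / 8) ⊆ UU n := by
  intro s hs
  rw [Metric.mem_ball, dist_eq_norm] at hs
  have h1 := abs_lt.1 ((Complex.abs_re_le_norm _).trans_lt hs)
  have h2 : ‖s‖ < 2 := by
    have := norm_add_le (s - 5 / 4) (5 / 4)
    rw [sub_add_cancel] at this
    norm_num at this
    linarith
  have e : (s - 5 / 4).re = s.re - 5 / 4 := by
    rw [Complex.sub_re]; norm_num
  rw [e] at h1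
  match n with
  | 0 => show 1 < s.re
         linarith [h1.1]
  | 1 => exact ⟨by linarith [h1.1], by linarith [h1.2], by linarith⟩
  | (n + 2) => exact ⟨by linarith [h1.2], by have : (0:ℝ) ≤ n := Nat.cast_nonneg n
                                             linarith⟩

lemma UU_cover (z : ℂ) : ∃ n, z ∈ UU n := by
  rcases lt_or_ge 1 z.re with h | h
  · exact ⟨0, h⟩
  · obtain ⟨n, hn⟩ := exists_nat_gt ‖z‖
    exact ⟨n + 2, by linarith, by linarith⟩

lemma exists_ext {δ : ℝ} (hδ : 0 < δ) (hδ1 : δ < 1 / 8) : ∃ M : ℝ, ∀ a : ℝ, 0 < a →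
    ∃ F : ℂ → ℂ, MeromorphicOn F Set.univ ∧ AnalyticAt ℂ F 0 ∧
      Set.EqOn F (fun s : ℂ => ∑' k : ℕ, cuspE0 a δ (k + 1) s) {s : ℂ | 1 < s.re} ∧
      (1 ≤ a → ‖deriv F 0 - riemannZeta 0 * (Real.log a : ℂ)‖ ≤ M / a ^ 2) := by
  obtain ⟨M, hM⟩ := near_zero hδ hδ1
  refine ⟨M, fun a ha => ?_⟩
  obtain ⟨G1, mG1, aG1, sG1, bG1⟩ := hM a ha
  have hreg : ∀ n : ℕ, ∃ G : ℂ → ℂ, MeromorphicOn G (UU (n + 2)) ∧ ∀ s ∈ UU (n + 2), 1 < s.re →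
      HasSum (fun k : ℕ => cuspE0 a δ (k + 1) s) (G s) := fun n =>
    region ha hδ (by linarith) (UU_open _) (R := n + 2) (fun s hs => hs.2.le) (fun s hs => hs.1)
  choose GG mGG sGG using hreg
  let G : ℕ → ℂ → ℂ := fun n => match n with
    | 0 => fun s : ℂ => ∑' k : ℕ, cuspE0 a δ (k + 1) s
    | 1 => G1
    | (n + 2) => GG n
  have hG : ∀ n, MeromorphicOn (G n) (UU n) := by
    intro n
    match n with
    | 0 => exact fun s hs => (right_analytic ha hδ hs).meromorphicAt
    | 1 => exact mG1
    | (n + 2) => exact mGG n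
  have hV1 : ∀ s ∈ Metric.ball (5 / 4 : ℂ) (1 / 8), 1 < s.re := fun s hs => V_sub 0 hs
  have hGs : ∀ n, ∀ s ∈ Metric.ball (5 / 4 : ℂ) (1 / 8), G n s = ∑' k : ℕ, cuspE0 a δ (k + 1) s := by
    intro n s hs
    match n with
    | 0 => rfl
    | 1 => exact (sG1 s (V_sub 1 hs) (hV1 s hs)).tsum_eq.symm
    | (n + 2) => exact (sGG n s (V_sub (n + 2) hs) (hV1 s hs)).tsum_eq.symm
  have hVne : (Metric.ball (5 / 4 : ℂ) (1 / 8)).Nonempty := ⟨5 / 4, Metric.mem_ball_self (by norm_num)⟩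
  obtain ⟨F, hF⟩ := glue (U := UU) (G := G) (V := Metric.ball (5 / 4 : ℂ) (1 / 8)) UU_open
    (fun n m => ⟨⟨5 / 4, V_sub n (Metric.mem_ball_self (by norm_num)),
      V_sub m (Metric.mem_ball_self (by norm_num))⟩,
      ((UU_convex n).inter (UU_convex m)).isPreconnected⟩) UU_cover hG Metric.isOpen_ball hVne V_sub
    (fun n m s hs => (hGs n s hs).trans (hGs m s hs).symm)
  have h0 := hF 1 0 (by simp [UU, U1])
  have hev : F =ᶠ[𝓝 0] G1 := by
    have h1 := eventually_nhdsWithin_iff.1 h0.1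
    filter_upwards [h1] with z hz
    by_cases h : z = 0
    · rw [h]; exact h0.2 aG1
    · exact hz h
  refine ⟨F, ?_, aG1.congr hev.symm, ?_, ?_⟩
  · intro z _
    obtain ⟨n, hn⟩ := UU_cover z
    exact (hG n z hn).congr (hF n z hn).1.symm
  · intro s hs
    exact (hF 0 s hs).2 (right_analytic ha hδ hs)
  · rw [hev.deriv_eq]
    exact bG1

/-- for fixed `δ ∈ (0,1/8)`, for every `a > 0` the series
`ζ_{E,0}(s) = Σ_{k≥1} E_{0,k}(s)` converges absolutely and locally uniformly on the strip
`1 < Re(s) < 2`, its sum extends to a meromorphic function on `ℂ` holomorphic at `s = 0`,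
and the derivative at `0` satisfies `ζ_{E,0}'(0) = ζ(0)·log a + O(1/a)` as `a → ∞`. -/
theorem statement1 (δ : ℝ) (hδ0 : 0 < δ) (hδ1 : δ < 1 / 8) :
    ∃ F : ℝ → ℂ → ℂ,
      (∀ a : ℝ, 0 < a →
        (∀ s ∈ {s : ℂ | 1 < s.re ∧ s.re < 2},
          Summable (fun k : ℕ => ‖cuspE0 a δ (k + 1) s‖)) ∧
        TendstoLocallyUniformlyOn
          (fun (n : ℕ) (s : ℂ) => ∑ k ∈ Finset.range n, cuspE0 a δ (k + 1) s)
          (fun s : ℂ => ∑' k : ℕ, cuspE0 a δ (k + 1) s)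
          atTop {s : ℂ | 1 < s.re ∧ s.re < 2} ∧
        MeromorphicOn (F a) Set.univ ∧
        Set.EqOn (F a) (fun s : ℂ => ∑' k : ℕ, cuspE0 a δ (k + 1) s)
          {s : ℂ | 1 < s.re ∧ s.re < 2} ∧
        AnalyticAt ℂ (F a) 0) ∧
      (fun a : ℝ => deriv (F a) 0 - riemannZeta 0 * (Real.log a : ℂ))
        =O[atTop] (fun a : ℝ => 1 / a) := by
  obtain ⟨M, hM⟩ := exists_ext hδ0 hδ1
  choose! F hF using hM
  refine ⟨F, fun a ha => ?_, ?_⟩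
  · obtain ⟨h1, h2, h3, -⟩ := hF a ha
    exact ⟨fun s hs => right_summable ha hδ0 hs.1,
      (right_unif ha hδ0).mono (fun s hs => hs.1), h1, fun s hs => h3 hs.1, h2⟩
  · refine Asymptotics.IsBigO.of_bound |M| ?_
    filter_upwards [eventually_ge_atTop (1:ℝ)] with a ha
    have ha0 : 0 < a := by linarith
    refine ((hF a ha0).2.2.2 ha).trans ?_
    rw [norm_div, norm_one, Real.norm_of_nonneg ha0.le, mul_one_div]
    exact div_le_div₀ (abs_nonneg M) (le_abs_self M) ha0 (by nlinarith)
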